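/- arXiv:1110.6140 — 2 statements merged into one kernel-verified Lean document; each statement's English description precedes it below -/
import Mathlib

section
/- Not every Π⁰₁ planar dendrite is almost computable: there exists a Π⁰₁ closed set H ⊆ ℝ² which is a dendrite, together with a real ε > 0, such that every computable closed set J ⊆ H which is a dendrite satisfies d_H(J, H) ≥ ε. -/
open Set Metric

section TopDefs

variable {α : Type*} [TopologicalSpace α]

/-- `A ⊆ α` is an arc with endpoints `x` and `y`:
a homeomorphic (continuous injective) image of `[0,1]` sending `0 ↦ x`, `1 ↦ y`. -/
def IsArc (A : Set α) (x y : α) : Prop :=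
  ∃ f : Set.Icc (0:ℝ) 1 → α, Continuous f ∧ Function.Injective f ∧
    Set.range f = A ∧ f ⟨0, by norm_num⟩ = x ∧ f ⟨1, by norm_num⟩ = y

/-- A continuum: a nonempty compact connected set. -/
def IsContinuum (X : Set α) : Prop := IsCompact X ∧ IsConnected X

/-- Any two distinct points of `X` are endpoints of an arc contained in `X`. -/
def ArcwiseConnectedSet (X : Set α) : Prop :=
  ∀ x ∈ X, ∀ y ∈ X, x ≠ y → ∃ A, A ⊆ X ∧ IsArc A x y

/-- `X` is unicoherent: for all closed connected `A, B ⊆ X` with `A ∪ B = X`,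
the intersection `A ∩ B` is connected. -/
def UnicoherentSet (X : Set α) : Prop :=
  ∀ A B : Set α, A ⊆ X → B ⊆ X → IsClosed A → IsClosed B →
    IsConnected A → IsConnected B → A ∪ B = X → IsConnected (A ∩ B)

/-- Every subcontinuum of `X` is unicoherent. -/
def HereditarilyUnicoherent (X : Set α) : Prop :=
  ∀ Y, Y ⊆ X → IsContinuum Y → UnicoherentSet Y

/-- A dendroid: an arcwise connected, hereditarily unicoherent continuum. -/
def IsDendroid (X : Set α) : Prop :=
  IsContinuum X ∧ ArcwiseConnectedSet X ∧ HereditarilyUnicoherent X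

/-- The unit circle `S¹`. -/
def unitCircle : Set (EuclideanSpace ℝ (Fin 2)) := Metric.sphere 0 1

/-- A dendrite: a locally connected continuum containing no subset homeomorphic to `S¹`. -/
def IsDendrite (X : Set α) : Prop :=
  IsContinuum X ∧ LocallyConnectedSpace ↥X ∧
    ∀ S : Set α, S ⊆ X → IsEmpty (↥S ≃ₜ ↥unitCircle)

/-- `x` and `y` lie in the same arc-component of `Y`. -/
def SameArcComponent (Y : Set α) (x y : α) : Prop :=
  x = y ∨ ∃ A, A ⊆ Y ∧ IsArc A x y

/-- `x` is a ramification point of `X`: `X \ {x}` has at least three arc-components. -/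
def IsRamificationPoint (X : Set α) (x : α) : Prop :=
  x ∈ X ∧ ∃ u v w, u ∈ X \ {x} ∧ v ∈ X \ {x} ∧ w ∈ X \ {x} ∧
    ¬ SameArcComponent (X \ {x}) u v ∧ ¬ SameArcComponent (X \ {x}) u w ∧
    ¬ SameArcComponent (X \ {x}) v w

/-- A tree (as a continuum): a dendrite with finitely many ramification points. -/
def IsTreeContinuum (X : Set α) : Prop :=
  IsDendrite X ∧ {x | IsRamificationPoint X x}.Finite

end TopDefs

section CompDefs

/-- The rational open ball in `ℝ²` coded by `((q₁, q₂), r)`. -/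
def ballOfCode (c : (ℚ × ℚ) × ℚ) : Set (ℝ × ℝ) :=
  {x | dist x (((c.1.1 : ℝ), (c.1.2 : ℝ)) : ℝ × ℝ) < (c.2 : ℝ)}

/-- A closed set `F ⊆ ℝ²` is `Π⁰₁` if it is the complement of the union of the rational
open balls coded by some c.e. set of codes. -/
def IsPi01Closed (F : Set (ℝ × ℝ)) : Prop :=
  ∃ W : (ℚ × ℚ) × ℚ → Prop, REPred W ∧ F = Set.univ \ ⋃ c ∈ {c | W c}, ballOfCode c

/-- `F ⊆ ℝ²` is c.e. closed if the set of codes of rational open balls meeting `F` is c.e. -/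
def IsCEClosed (F : Set (ℝ × ℝ)) : Prop :=
  REPred (fun c : (ℚ × ℚ) × ℚ => (F ∩ ballOfCode c).Nonempty)

/-- A computable closed subset of `ℝ²`: both `Π⁰₁` and c.e. closed. -/
def IsComputableClosed (F : Set (ℝ × ℝ)) : Prop :=
  IsPi01Closed F ∧ IsCEClosed F

/-- A point of `ℝ²` is computable if the set of codes of rational open balls
containing it is c.e. -/
def IsComputablePoint (x : ℝ × ℝ) : Prop :=
  REPred (fun c : (ℚ × ℚ) × ℚ => x ∈ ballOfCode c)

end CompDefs

section PsiDefs

/-- A tree of binary strings: a set of finite binary strings closed under prefixes. -/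
def IsTreeOfStrings (T : Set (List Bool)) : Prop :=
  ∀ σ ∈ T, ∀ τ : List Bool, τ <+: σ → τ ∈ T

/-- The point `ψ(σ) ∈ ℝ²` associated with the binary string `σ`. -/
noncomputable def psiPt (σ : List Bool) : ℝ × ℝ :=
  ((3:ℝ) ^ (-(σ.length : ℤ)) / 2 +
      2 * ∑ i ∈ Finset.range σ.length,
        (if σ.getD i false then (3:ℝ) ^ (-((i : ℤ) + 1)) else 0),
    (2:ℝ) ^ (-(σ.length : ℤ)))

/-- The planar embedding `Ψ(T)` of a tree `T` of binary strings: the closure of the union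
of the segments from `ψ(σ⁻)` to `ψ(σ)` over nonempty `σ ∈ T` (together with the points
`ψ(σ)`, `σ ∈ T`, which makes no difference except for the degenerate trees `∅`, `{⟨⟩}`). -/
noncomputable def PsiSet (T : Set (List Bool)) : Set (ℝ × ℝ) :=
  closure (psiPt '' T ∪ ⋃ σ ∈ T, ⋃ (_ : σ ≠ []), segment ℝ (psiPt σ.dropLast) (psiPt σ))

end PsiDefs


open Topology
open Encodable Denumerable

/-! ### Computability of rational arithmetic -/

/-- The raw code of a rational number. -/
def ratE (q : ℚ) : ℕ := Nat.pair (Equiv.intEquivNat q.num) q.den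

theorem ratE_eq : ratE = @encode ℚ Rat.instEncodable := rfl

theorem ratE_ofNat_strictMono : StrictMono (fun k : ℕ => ratE (Denumerable.ofNat ℚ k)) := by
  refine strictMono_nat_of_lt_succ fun k => ?_
  have i2 : Infinite (Set.range (@encode ℚ Rat.instEncodable)) :=
    Infinite.of_injective _ (Equiv.ofInjective _ (@encode_injective ℚ Rat.instEncodable)).injective
  have key : ∀ k, ratE (@Denumerable.ofNat ℚ _ k) =
      (@Nat.Subtype.ofNat (Set.range (@encode ℚ Rat.instEncodable))
        (@decidableRangeEncode ℚ Rat.instEncodable) i2 k : ℕ) := by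
    intro k
    have h1 : @Denumerable.ofNat ℚ _ k = (@equivRangeEncode ℚ Rat.instEncodable).symm
      (@Nat.Subtype.ofNat (Set.range (@encode ℚ Rat.instEncodable))
        (@decidableRangeEncode ℚ Rat.instEncodable) i2 k) := rfl
    rw [h1]
    exact congrArg Subtype.val ((@equivRangeEncode ℚ Rat.instEncodable).apply_symm_apply _)
  rw [key, key]
  exact @Nat.Subtype.lt_succ_self _ i2 (@decidableRangeEncode ℚ Rat.instEncodable) _

/-- The natural numbers that are raw codes of rational numbers. -/
def IsRatCode (m : ℕ) : Prop :=
  ∀ x < m.unpair.2 + 1, ¬ ((m.unpair.2 = 0) ∨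
    (((m.unpair.1 + 1) / 2) % x = 0 ∧ m.unpair.2 % x = 0 ∧ 2 ≤ x))

instance : DecidablePred IsRatCode := fun m => by unfold IsRatCode; infer_instance

theorem intCode_natAbs (z : ℤ) : (Equiv.intEquivNat z + 1) / 2 = z.natAbs := by
  cases z with
  | ofNat k => change (2 * k + 1) / 2 = k; omega
  | negSucc k => change (2 * k + 1 + 1) / 2 = k + 1; omega

theorem isRatCode_iff (m : ℕ) : IsRatCode m ↔ ∃ q, ratE q = m := by
  constructor
  · intro h
    have h0 : m.unpair.2 ≠ 0 := fun h0 => h 0 (by omega) (Or.inl h0)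
    obtain ⟨z, hz⟩ := Equiv.intEquivNat.surjective m.unpair.1
    have hc : z.natAbs.Coprime m.unpair.2 := by
      by_contra hc
      have hg : 2 ≤ Nat.gcd z.natAbs m.unpair.2 := by
        have : Nat.gcd z.natAbs m.unpair.2 ≠ 0 := by
          intro h; exact h0 (Nat.gcd_eq_zero_iff.1 h).2
        have h1 : Nat.gcd z.natAbs m.unpair.2 ≠ 1 := hc
        omega
      refine h (Nat.gcd z.natAbs m.unpair.2)
        (Nat.lt_succ_of_le (Nat.gcd_le_right _ (Nat.pos_of_ne_zero h0))) (Or.inr ⟨?_, ?_, hg⟩)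
      · rw [← hz, intCode_natAbs]; exact Nat.mod_eq_zero_of_dvd (Nat.gcd_dvd_left _ _)
      · exact Nat.mod_eq_zero_of_dvd (Nat.gcd_dvd_right _ _)
    refine ⟨⟨z, m.unpair.2, h0, hc⟩, ?_⟩
    simp [ratE, hz]
  · rintro ⟨q, rfl⟩ x _ h
    simp only [ratE, Nat.unpair_pair, intCode_natAbs] at h
    rcases h with h | ⟨h1, h2, h3⟩
    · exact q.den_nz h
    · have := Nat.dvd_gcd (Nat.dvd_of_mod_eq_zero h1) (Nat.dvd_of_mod_eq_zero h2)
      rw [q.reduced] at this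
      have := Nat.le_of_dvd one_pos this
      omega

/-- The code of a rational number in the `Primcodable` structure. -/
def ratC (q : ℚ) : ℕ := @encode ℚ Primcodable.toEncodable q

theorem ofNat_ratC (q : ℚ) : Denumerable.ofNat ℚ (ratC q) = q :=
  @Denumerable.ofNat_encode ℚ Rat.instDenumerable q

theorem computable_ratC : Computable ratC := Computable.encode

theorem count_ratE (k : ℕ) : Nat.count IsRatCode (ratE (Denumerable.ofNat ℚ k)) = k := by
  have hall : ∀ i, IsRatCode (ratE (Denumerable.ofNat ℚ i)) := fun i => (isRatCode_iff _).2 ⟨_, rfl⟩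
  have hinf : (Set.ofPred IsRatCode).Infinite := by
    refine Set.infinite_of_injective_forall_mem ratE_ofNat_strictMono.injective hall
  have h := Nat.nth_comp_of_strictMono (p := IsRatCode) (n := k) ratE_ofNat_strictMono
    (by
      intro m hm
      obtain ⟨q, rfl⟩ := (isRatCode_iff m).1 hm
      exact ⟨ratC q, congrArg ratE (ofNat_ratC q)⟩) (fun hf => absurd hf hinf)
  have h2 : (fun i => IsRatCode (ratE (Denumerable.ofNat ℚ i))) = fun _ => True := by
    funext i; exact eq_true (hall i)
  rw [h2, Nat.nth_true] at h
  rw [h, Nat.count_nth (fun hf => absurd hf hinf)]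

theorem primrec_isRatCode : PrimrecPred IsRatCode := by
  have hu1 : Primrec (fun p : ℕ × ℕ => p.2.unpair.1) :=
    Primrec.fst.comp (Primrec.unpair.comp Primrec.snd)
  have hu2 : Primrec (fun p : ℕ × ℕ => p.2.unpair.2) :=
    Primrec.snd.comp (Primrec.unpair.comp Primrec.snd)
  have hR : PrimrecRel (fun x m : ℕ => ¬ ((m.unpair.2 = 0) ∨
    (((m.unpair.1 + 1) / 2) % x = 0 ∧ m.unpair.2 % x = 0 ∧ 2 ≤ x))) := by
    refine PrimrecPred.not (PrimrecPred.or ?_ (PrimrecPred.and ?_ (PrimrecPred.and ?_ ?_)))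
    · exact Primrec.eq.comp hu2 (Primrec.const 0)
    · exact Primrec.eq.comp (Primrec.nat_mod.comp (Primrec.nat_div.comp
        (Primrec.succ.comp hu1) (Primrec.const 2)) Primrec.fst) (Primrec.const 0)
    · exact Primrec.eq.comp (Primrec.nat_mod.comp hu2 Primrec.fst) (Primrec.const 0)
    · exact Primrec.nat_le.comp (Primrec.const 2) Primrec.fst
  exact (hR.forall_lt).comp (Primrec.succ.comp (Primrec.snd.comp Primrec.unpair)) Primrec.id

theorem primrec_count : Primrec (Nat.count IsRatCode) := by
  have h : Primrec (fun n : ℕ => Nat.rec (motive := fun _ => ℕ) 0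
      (fun k c => c + if IsRatCode k then 1 else 0) n) := by
    refine Primrec.nat_rec' (f := fun n : ℕ => n) (g := fun _ => 0)
      (h := fun _ p => p.2 + if IsRatCode p.1 then 1 else 0) Primrec.id (Primrec.const 0) ?_
    refine Primrec.nat_add.comp (Primrec.snd.comp Primrec.snd) ?_
    exact Primrec.ite (primrec_isRatCode.comp (Primrec.fst.comp Primrec.snd))
      (Primrec.const 1) (Primrec.const 0)
  refine h.of_eq fun n => ?_
  induction n with
  | zero => simp
  | succ n ih => rw [Nat.count_succ, ← ih]

theorem computable_ratE : Computable ratE := by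
  have hex : ∀ k : ℕ, ∃ m, IsRatCode m ∧ Nat.count IsRatCode m = k := fun k =>
    ⟨_, (isRatCode_iff _).2 ⟨_, rfl⟩, count_ratE k⟩
  have hp : PrimrecPred (fun p : ℕ × ℕ => IsRatCode p.2 ∧ Nat.count IsRatCode p.2 = p.1) :=
    (primrec_isRatCode.comp Primrec.snd).and
      (Primrec.eq.comp (primrec_count.comp Primrec.snd) Primrec.fst)
  have hf := Computable.find (P := fun k m => IsRatCode m ∧ Nat.count IsRatCode m = k)
    hp.computablePred hex
  refine (hf.comp computable_ratC).of_eq fun q => ?_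
  have h1 := Nat.find_spec (hex (ratC q))
  have h2 : IsRatCode (ratE q) ∧ Nat.count IsRatCode (ratE q) = ratC q := by
    refine ⟨(isRatCode_iff _).2 ⟨_, rfl⟩, ?_⟩
    have := count_ratE (ratC q)
    rwa [ofNat_ratC] at this
  exact Nat.count_injective h1.1 h2.1 (h1.2.trans h2.2.symm)

section CompTools

variable {α : Type*} [Primcodable α]

theorem cp_and {p q : α → Prop} (hp : ComputablePred p) (hq : ComputablePred q) :
    ComputablePred fun a => p a ∧ q a := by
  classical
  obtain ⟨_, hp⟩ := hp
  obtain ⟨_, hq⟩ := hq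
  refine Computable.computablePred ?_
  exact (Primrec.and.to_comp.comp hp hq).of_eq fun a => by simp

theorem cp_or {p q : α → Prop} (hp : ComputablePred p) (hq : ComputablePred q) :
    ComputablePred fun a => p a ∨ q a := by
  classical
  obtain ⟨_, hp⟩ := hp
  obtain ⟨_, hq⟩ := hq
  refine Computable.computablePred ?_
  exact (Primrec.or.to_comp.comp hp hq).of_eq fun a => by simp

theorem cp_comp {β : Type*} [Primcodable β] {p : β → Prop} {f : α → β} (hp : ComputablePred p)
    (hf : Computable f) : ComputablePred fun a => p (f a) := by
  classical
  obtain ⟨_, hp⟩ := hp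
  exact Computable.computablePred (hp.comp hf)

theorem cp_le {f g : α → ℕ} (hf : Computable f) (hg : Computable g) :
    ComputablePred fun a => f a ≤ g a :=
  cp_comp (f := fun a => (f a, g a)) (PrimrecPred.computablePred (p := fun p : ℕ × ℕ => p.1 ≤ p.2)
    Primrec.nat_le) (hf.pair hg)

theorem cp_eq {β : Type*} [Primcodable β] [DecidableEq β] {f g : α → β} (hf : Computable f)
    (hg : Computable g) : ComputablePred fun a => f a = g a :=
  cp_comp (f := fun a => (f a, g a)) (PrimrecPred.computablePred (p := fun p : β × β => p.1 = p.2)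
    Primrec.eq) (hf.pair hg)

theorem co_add {f g : α → ℕ} (hf : Computable f) (hg : Computable g) :
    Computable fun a => f a + g a := Primrec.nat_add.to_comp.comp hf hg

theorem co_mul {f g : α → ℕ} (hf : Computable f) (hg : Computable g) :
    Computable fun a => f a * g a := Primrec.nat_mul.to_comp.comp hf hg

theorem re_of_exists {R : α × ℕ → Prop} (hR : ComputablePred R) :
    REPred fun a => ∃ k, R (a, k) := by
  classical
  obtain ⟨_, hR⟩ := hR
  have h : Partrec (fun a ↦ Nat.rfind fun n => Part.some (decide (R (a, n)))) :=
    Partrec.rfind hR.partrec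
  refine (Partrec.dom_re h).of_eq fun a => ?_
  refine Nat.rfind_dom'.trans ?_
  simp

theorem exists_of_re {p : α → Prop} (hp : REPred p) :
    ∃ R : α × ℕ → Prop, ComputablePred R ∧ ∀ a, p a ↔ ∃ k, R (a, k) := by
  obtain ⟨c, hc⟩ := Nat.Partrec.Code.exists_code.1 hp
  refine ⟨fun x => (Nat.Partrec.Code.evaln x.2 c (encode x.1)).isSome = true, ?_, fun a => ?_⟩
  · refine cp_eq (Primrec.option_isSome.to_comp.comp (Nat.Partrec.Code.primrec_evaln.to_comp.comp
      ((Computable.snd.pair (Computable.const c)).pair (Computable.encode.comp Computable.fst))))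
      (Computable.const true)
  · have h1 : (Nat.Partrec.Code.eval c (encode a)).Dom ↔ p a := by
      rw [hc]; simp; exact ⟨fun h => h.1, fun h => ⟨h, trivial⟩⟩
    rw [← h1, Part.dom_iff_mem]
    constructor
    · rintro ⟨y, hy⟩
      obtain ⟨k, hk⟩ := Nat.Partrec.Code.evaln_complete.1 hy
      exact ⟨k, Option.isSome_iff_exists.2 ⟨y, hk⟩⟩
    · rintro ⟨k, hk⟩
      obtain ⟨y, hy⟩ := Option.isSome_iff_exists.1 hk
      exact ⟨y, Nat.Partrec.Code.evaln_sound hy⟩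

/-- Existential quantification over a (denumerable) type preserves r.e.-ness. -/
theorem re_exists {β : Type*} [Denumerable β] {p : α × β → Prop} (hp : REPred p) :
    REPred fun a => ∃ b, p (a, b) := by
  obtain ⟨R, hR, h⟩ := exists_of_re hp
  have : REPred fun a => ∃ k : ℕ, R ((a, Denumerable.ofNat β k.unpair.1), k.unpair.2) := by
    refine re_of_exists (R := fun x : α × ℕ =>
      R ((x.1, Denumerable.ofNat β x.2.unpair.1), x.2.unpair.2)) (cp_comp hR ?_)
    have hu := Primrec.unpair.to_comp.comp (Computable.snd (α := α) (β := ℕ))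
    exact (Computable.fst.pair ((Computable.ofNat β).comp (Computable.fst.comp hu))).pair
      (Computable.snd.comp hu)
  refine this.of_eq fun a => ⟨?_, ?_⟩
  · rintro ⟨k, hk⟩
    exact ⟨_, (h _).2 ⟨_, hk⟩⟩
  · rintro ⟨b, hb⟩
    obtain ⟨k, hk⟩ := (h _).1 hb
    refine ⟨Nat.pair (encode b) k, ?_⟩
    simpa using hk

theorem re_and {p q : α → Prop} (hp : REPred p) (hq : ComputablePred q) :
    REPred fun a => p a ∧ q a := by
  obtain ⟨R, hR, h⟩ := exists_of_re hp
  refine (re_of_exists (R := fun x : α × ℕ => R x ∧ q x.1)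
    (cp_and hR (cp_comp hq Computable.fst))).of_eq fun a => ?_
  rw [h]; simp

theorem re_comp {β : Type*} [Primcodable β] {p : β → Prop} {f : α → β} (hp : REPred p)
    (hf : Computable f) : REPred fun a => p (f a) := Partrec.comp hp hf

/-- Two r.e. predicates covering everything: computable choice. -/
theorem re_choice {P Q : ℕ → Prop} (hP : REPred P) (hQ : REPred Q) (h : ∀ n, P n ∨ Q n) :
    ∃ g : ℕ → ℕ, Computable g ∧ ∀ n, (g n = 0 ∧ P n) ∨ (g n = 1 ∧ Q n) := by
  classical
  obtain ⟨R, hR, hPR⟩ := exists_of_re hP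
  obtain ⟨S, hS, hQS⟩ := exists_of_re hQ
  have hex : ∀ n, ∃ k, R (n, k) ∨ S (n, k) := by
    intro n
    rcases h n with h | h
    · obtain ⟨k, hk⟩ := (hPR n).1 h
      exact ⟨k, Or.inl hk⟩
    · obtain ⟨k, hk⟩ := (hQS n).1 h
      exact ⟨k, Or.inr hk⟩
  have hf := Computable.find (P := fun n k => R (n, k) ∨ S (n, k)) (cp_or hR hS) hex
  have hR' := hR.decide
  refine ⟨fun n => bif decide (R (n, Nat.find (hex n))) then 0 else 1,
    Computable.cond (hR'.comp (Computable.id.pair hf)) (Computable.const 0)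
      (Computable.const 1), fun n => ?_⟩
  by_cases hr : R (n, Nat.find (hex n))
  · left; simpa [hr] using (hPR n).2 ⟨_, hr⟩
  · right; simpa [hr] using (hQS n).2 ⟨_, (Nat.find_spec (hex n)).resolve_left hr⟩

/-- A rational-valued function given by computable numerator and denominator. -/
def CompRat (f : α → ℚ) : Prop :=
  ∃ P M D : α → ℕ, Computable P ∧ Computable M ∧ Computable D ∧
    ∀ a, 0 < D a ∧ f a = ((P a : ℚ) - M a) / D a

theorem CompRat.le {f g : α → ℚ} (hf : CompRat f) (hg : CompRat g) :
    ComputablePred fun a => f a ≤ g a := by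
  obtain ⟨P, M, D, hP, hM, hD, h⟩ := hf
  obtain ⟨P', M', D', hP', hM', hD', h'⟩ := hg
  refine (cp_le (co_add (co_mul hP hD') (co_mul hM' hD))
    (co_add (co_mul hP' hD) (co_mul hM hD'))).of_eq fun a => ?_
  obtain ⟨h1, h2⟩ := h a
  obtain ⟨h3, h4⟩ := h' a
  have h1' : (0 : ℚ) < D a := by exact_mod_cast h1
  have h3' : (0 : ℚ) < D' a := by exact_mod_cast h3
  rw [h2, h4, div_le_div_iff₀ h1' h3', ← Nat.cast_le (α := ℚ)]
  push_cast
  constructor <;> intro h <;> linarith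

theorem CompRat.lt {f g : α → ℚ} (hf : CompRat f) (hg : CompRat g) :
    ComputablePred fun a => f a < g a :=
  (hg.le hf).not.of_eq fun a => not_le

theorem CompRat.add {f g : α → ℚ} (hf : CompRat f) (hg : CompRat g) :
    CompRat fun a => f a + g a := by
  obtain ⟨P, M, D, hP, hM, hD, h⟩ := hf
  obtain ⟨P', M', D', hP', hM', hD', h'⟩ := hg
  refine ⟨_, _, _, co_add (co_mul hP hD') (co_mul hP' hD), co_add (co_mul hM hD') (co_mul hM' hD),
    co_mul hD hD', fun a => ?_⟩
  obtain ⟨h1, h2⟩ := h a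
  obtain ⟨h3, h4⟩ := h' a
  have h1' : (D a : ℚ) ≠ 0 := by exact_mod_cast h1.ne'
  have h3' : (D' a : ℚ) ≠ 0 := by exact_mod_cast h3.ne'
  refine ⟨Nat.mul_pos h1 h3, ?_⟩
  simp only [h2, h4]
  push_cast
  field_simp
  ring

theorem CompRat.neg {f : α → ℚ} (hf : CompRat f) : CompRat fun a => - f a := by
  obtain ⟨P, M, D, hP, hM, hD, h⟩ := hf
  refine ⟨_, _, _, hM, hP, hD, fun a => ⟨(h a).1, ?_⟩⟩
  simp only [(h a).2]; ring

theorem CompRat.sub {f g : α → ℚ} (hf : CompRat f) (hg : CompRat g) :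
    CompRat fun a => f a - g a := by
  simpa [sub_eq_add_neg] using hf.add hg.neg

theorem CompRat.mul {f g : α → ℚ} (hf : CompRat f) (hg : CompRat g) :
    CompRat fun a => f a * g a := by
  obtain ⟨P, M, D, hP, hM, hD, h⟩ := hf
  obtain ⟨P', M', D', hP', hM', hD', h'⟩ := hg
  refine ⟨_, _, _, co_add (co_mul hP hP') (co_mul hM hM'), co_add (co_mul hP hM') (co_mul hM hP'),
    co_mul hD hD', fun a => ?_⟩
  obtain ⟨h1, h2⟩ := h a
  obtain ⟨h3, h4⟩ := h' a
  have h1' : (D a : ℚ) ≠ 0 := by exact_mod_cast h1.ne'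
  have h3' : (D' a : ℚ) ≠ 0 := by exact_mod_cast h3.ne'
  refine ⟨Nat.mul_pos h1 h3, ?_⟩
  simp only [h2, h4]
  push_cast
  field_simp
  ring

theorem CompRat.natCast {f : α → ℕ} (hf : Computable f) : CompRat fun a => (f a : ℚ) :=
  ⟨f, fun _ => 0, fun _ => 1, hf, Computable.const 0, Computable.const 1, fun a => by simp⟩

theorem CompRat.const (q : ℚ) : CompRat fun _ : α => q := by
  refine ⟨fun _ => q.num.toNat, fun _ => (-q.num).toNat, fun _ => q.den, Computable.const _,
    Computable.const _, Computable.const _, fun a => ⟨q.den_pos, ?_⟩⟩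
  have h : ((q.num.toNat : ℚ) - ((-q.num).toNat : ℚ)) = q.num := by
    exact_mod_cast Int.toNat_sub_toNat_neg q.num
  rw [h, Rat.num_div_den]

theorem CompRat.of_eq {f g : α → ℚ} (hf : CompRat f) (h : ∀ a, f a = g a) : CompRat g := by
  have : f = g := funext h
  rwa [← this]

theorem CompRat.half_pow {f : α → ℕ} (hf : Computable f) : CompRat fun a => (1 / 2 : ℚ) ^ f a := by
  have hp : Primrec (fun n : ℕ => Nat.rec (motive := fun _ => ℕ) 1 (fun _ c => 2 * c) n) :=
    Primrec.nat_rec' (f := fun n : ℕ => n) (g := fun _ => 1)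
      (h := fun _ p => 2 * p.2) Primrec.id (Primrec.const 1)
      (Primrec.nat_mul.comp (Primrec.const 2) (Primrec.snd.comp Primrec.snd))
  have hp2 : Primrec (fun n : ℕ => 2 ^ n) := hp.of_eq fun n => by
    induction n with
    | zero => simp
    | succ n ih => rw [pow_succ', ← ih]
  refine ⟨fun _ => 1, fun _ => 0, _, Computable.const 1, Computable.const 0, hp2.to_comp.comp hf,
    fun a => ⟨by positivity, ?_⟩⟩
  simp

theorem CompRat.of_computable {f : α → ℚ} (hf : Computable f) : CompRat f := by
  have h1 : Computable fun a => (ratE (f a)).unpair.1 :=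
    Computable.fst.comp (Primrec.unpair.to_comp.comp (computable_ratE.comp hf))
  have h2 : Computable fun a => (ratE (f a)).unpair.2 :=
    Computable.snd.comp (Primrec.unpair.to_comp.comp (computable_ratE.comp hf))
  have hpos : Primrec fun k : ℕ => if k % 2 = 0 then k / 2 else 0 :=
    Primrec.ite (Primrec.eq.comp (Primrec.nat_mod.comp Primrec.id (Primrec.const 2))
      (Primrec.const 0)) (Primrec.nat_div.comp Primrec.id (Primrec.const 2)) (Primrec.const 0)
  have hneg : Primrec fun k : ℕ => if k % 2 = 0 then 0 else k / 2 + 1 :=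
    Primrec.ite (Primrec.eq.comp (Primrec.nat_mod.comp Primrec.id (Primrec.const 2))
      (Primrec.const 0)) (Primrec.const 0)
      (Primrec.succ.comp (Primrec.nat_div.comp Primrec.id (Primrec.const 2)))
  refine ⟨_, _, _, hpos.to_comp.comp h1, hneg.to_comp.comp h1, h2, fun a => ?_⟩
  generalize f a = q
  simp only [ratE, Nat.unpair_pair]
  refine ⟨q.den_pos, ?_⟩
  conv_lhs => rw [← Rat.num_div_den q]
  congr 1
  generalize q.num = z
  cases z with
  | ofNat k =>
    change ((k : ℤ) : ℚ) = ((if (2 * k) % 2 = 0 then (2 * k) / 2 else 0 : ℕ) : ℚ) -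
      ((if (2 * k) % 2 = 0 then 0 else (2 * k) / 2 + 1 : ℕ) : ℚ)
    simp
  | negSucc k =>
    change ((Int.negSucc k : ℤ) : ℚ) = ((if (2 * k + 1) % 2 = 0 then (2 * k + 1) / 2 else 0 : ℕ) : ℚ) -
      ((if (2 * k + 1) % 2 = 0 then 0 else (2 * k + 1) / 2 + 1 : ℕ) : ℚ)
    have e1 : ¬ (2 * k + 1) % 2 = 0 := by omega
    have e2 : (2 * k + 1) / 2 = k := by omega
    rw [if_neg e1, if_neg e1, e2]
    push_cast
    ring

theorem CompRat.comp {β : Type*} [Primcodable β] {f : β → ℚ} {g : α → β} (hf : CompRat f)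
    (hg : Computable g) : CompRat fun a => f (g a) := by
  obtain ⟨P, M, D, hP, hM, hD, h⟩ := hf
  exact ⟨_, _, _, hP.comp hg, hM.comp hg, hD.comp hg, fun a => h (g a)⟩

theorem CompRat.computable {f : α → ℚ} (hf : CompRat f) : Computable f := by
  classical
  have hq : CompRat fun p : α × ℕ => Denumerable.ofNat ℚ p.2 :=
    CompRat.of_computable ((Computable.ofNat ℚ).comp Computable.snd)
  have hf' : CompRat fun p : α × ℕ => f p.1 := hf.comp Computable.fst
  have hex : ∀ a, ∃ k : ℕ, Denumerable.ofNat ℚ k ≤ f a ∧ f a ≤ Denumerable.ofNat ℚ k := fun a =>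
    ⟨ratC (f a), by rw [ofNat_ratC], by rw [ofNat_ratC]⟩
  have hfind := Computable.find (P := fun a k => Denumerable.ofNat ℚ k ≤ f a ∧
    f a ≤ Denumerable.ofNat ℚ k) (cp_and (hq.le hf') (hf'.le hq)) hex
  refine ((Computable.ofNat ℚ).comp hfind).of_eq fun a => ?_
  exact le_antisymm (Nat.find_spec (hex a)).1 (Nat.find_spec (hex a)).2

end CompTools

/-! ### No circles -/

theorem circle_compl_preconnected (v : ↥unitCircle) : IsPreconnected ({v}ᶜ : Set ↥unitCircle) := by
  have hv : ‖(v : EuclideanSpace ℝ (Fin 2))‖ = 1 := by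
    have := v.2
    simpa [unitCircle] using this
  have h := (stereographic hv).symm_image_target_eq_source
  have hc := (stereographic hv).continuousOn_symm
  rw [stereographic_target] at h hc
  rw [stereographic_source] at h
  have : IsPreconnected (({⟨(v : EuclideanSpace ℝ (Fin 2)), by simp [hv]⟩}ᶜ :
      Set (sphere (0 : EuclideanSpace ℝ (Fin 2)) 1))) := by
    rw [← h]
    exact isPreconnected_univ.image _ hc
  exact this

theorem circle_two_points : ∃ a b : ↥unitCircle, a ≠ b := by
  refine ⟨⟨!₂[1, 0], ?_⟩, ⟨!₂[-1, 0], ?_⟩, ?_⟩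
  · simp [unitCircle, EuclideanSpace.norm_eq]
  · simp [unitCircle, EuclideanSpace.norm_eq]
  · intro h
    have h1 := congrArg (fun z : ↥unitCircle => (z : EuclideanSpace ℝ (Fin 2)) 0) h
    simp at h1
    norm_num at h1

theorem no_circle_sep {S : Set (ℝ × ℝ)} (φ : ↥S ≃ₜ ↥unitCircle) (f : ℝ × ℝ → ℝ)
    (hf : Continuous f) (c : ℝ) (hs : ∀ p ∈ S, ∀ q ∈ S, f p = c → f q = c → p = q)
    {p q : ℝ × ℝ} (hp : p ∈ S) (hq : q ∈ S) (h1 : f p < c) (h2 : c < f q) : False := by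
  have hcirc : IsPreconnected (univ : Set ↥unitCircle) := by
    have : IsPreconnected unitCircle := by
      refine (isConnected_sphere ?_ 0 zero_le_one).isPreconnected
      rw [← Module.finrank_eq_rank]
      simp
    exact (isPreconnected_iff_preconnectedSpace.1 this).isPreconnected_univ
  have hS : IsPreconnected S := by
    have := hcirc.image (fun x => (φ.symm x : ℝ × ℝ))
      (continuous_subtype_val.comp φ.symm.continuous).continuousOn
    convert this using 1
    ext x
    constructor
    · intro hx; exact ⟨φ ⟨x, hx⟩, trivial, by simp⟩
    · rintro ⟨y, -, rfl⟩; exact (φ.symm y).2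
  obtain ⟨z, hz, hzc⟩ := hS.intermediate_value hp hq hf.continuousOn ⟨h1.le, h2.le⟩
  have hS2 : IsPreconnected (S \ {z}) := by
    have := (circle_compl_preconnected (φ ⟨z, hz⟩)).image (fun x => (φ.symm x : ℝ × ℝ))
      (continuous_subtype_val.comp φ.symm.continuous).continuousOn
    convert this using 1
    ext x
    constructor
    · rintro ⟨hx, hxz⟩
      refine ⟨φ ⟨x, hx⟩, ?_, by simp⟩
      intro h
      apply hxz
      have := φ.injective h
      exact congrArg Subtype.val this
    · rintro ⟨y, hy, rfl⟩
      refine ⟨(φ.symm y).2, ?_⟩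
      intro h
      apply hy
      have : φ.symm y = ⟨z, hz⟩ := Subtype.ext h
      rw [← this]; simp
  have hpz : p ≠ z := by rintro rfl; exact h1.ne hzc
  have hqz : q ≠ z := by rintro rfl; exact h2.ne' hzc
  obtain ⟨w, hw, hwc⟩ := hS2.intermediate_value ⟨hp, hpz⟩ ⟨hq, hqz⟩ hf.continuousOn ⟨h1.le, h2.le⟩
  exact hw.2 (hs w hw.1 z hz hwc hzc)

theorem no_circle {H : Set (ℝ × ℝ)} (E : Set ℝ) (hE : E.Countable)
    (hfib : ∀ p ∈ H, ∀ q ∈ H, p.1 = q.1 → p.1 ∉ E → p = q) :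
    ∀ S : Set (ℝ × ℝ), S ⊆ H → IsEmpty (↥S ≃ₜ ↥unitCircle) := by
  intro S hSH
  refine ⟨fun φ => ?_⟩
  by_cases hx : ∃ p ∈ S, ∃ q ∈ S, p.1 < q.1
  · obtain ⟨p, hp, q, hq, hlt⟩ := hx
    obtain ⟨c, hc, hcE⟩ : ∃ c ∈ Ioo p.1 q.1, c ∉ E := by
      by_contra hcon
      push Not at hcon
      have hsub : Ioo p.1 q.1 ⊆ E := hcon
      have hcc := hE.mono hsub
      have := Cardinal.mk_Ioo_real hlt
      have h2 := hcc.le_aleph0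
      rw [this] at h2
      exact absurd h2 (not_le.2 Cardinal.aleph0_lt_continuum)
    refine no_circle_sep φ Prod.fst continuous_fst c ?_ hp hq hc.1 hc.2
    intro a ha b hb h1 h2
    exact hfib a (hSH ha) b (hSH hb) (h1.trans h2.symm) (h1 ▸ hcE)
  · push Not at hx
    have heq : ∀ p ∈ S, ∀ q ∈ S, p.1 = q.1 := fun p hp q hq =>
      le_antisymm (hx q hq p hp) (hx p hp q hq)
    obtain ⟨a, b, hab⟩ := circle_two_points
    have hne : φ.symm a ≠ φ.symm b := fun h => hab (φ.symm.injective h)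
    have key : ∀ p ∈ S, ∀ q ∈ S, p.2 < q.2 → False := by
      intro p hp q hq hlt
      refine no_circle_sep φ Prod.snd continuous_snd ((p.2 + q.2) / 2) ?_ hp hq
        (by linarith) (by linarith)
      intro a ha b hb h1 h2
      exact Prod.ext (heq a ha b hb) (h1.trans h2.symm)
    rcases lt_trichotomy (φ.symm a : ℝ × ℝ).2 (φ.symm b : ℝ × ℝ).2 with h | h | h
    · exact key _ (φ.symm a).2 _ (φ.symm b).2 h
    · exact hne (Subtype.ext (Prod.ext (heq _ (φ.symm a).2 _ (φ.symm b).2) h))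
    · exact key _ (φ.symm b).2 _ (φ.symm a).2 h

/-- Locally connected continua as continuous images of an interval. -/
theorem locallyConnected_of_image {H : Set (ℝ × ℝ)} (γ : ℝ → ℝ × ℝ) (hγ : Continuous γ)
    (h : γ '' Icc (-1) 1 = H) : LocallyConnectedSpace ↥H := by
  have h11 : (-1 : ℝ) ≤ 1 := by norm_num
  have : LocallyConnectedSpace ↥(Icc (-1 : ℝ) 1) := by
    have hq : IsQuotientMap (projIcc (-1 : ℝ) 1 h11) :=
      IsQuotientMap.of_inverse continuous_subtype_val continuous_projIcc
        (fun x => projIcc_val h11 x)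
    exact hq.isCoinducing.locallyConnectedSpace
  let g : ↥(Icc (-1 : ℝ) 1) → ↥H := fun t => ⟨γ t, h ▸ ⟨t, t.2, rfl⟩⟩
  have hg : Continuous g := (hγ.comp continuous_subtype_val).subtype_mk _
  have hs : Function.Surjective g := by
    rintro ⟨x, hx⟩
    rw [← h] at hx
    obtain ⟨t, ht, rfl⟩ := hx
    exact ⟨⟨t, ht⟩, rfl⟩
  exact (IsQuotientMap.of_surjective_continuous hs hg).isCoinducing.locallyConnectedSpace

/-! ### The dendrite -/

/-- Scale of the `n`-th tile. -/
noncomputable def rr (n : ℕ) : ℝ := (1 / 2 : ℝ) ^ n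

theorem rr_pos (n : ℕ) : 0 < rr n := by unfold rr; positivity

theorem rr_succ (n : ℕ) : rr (n + 1) = rr n / 2 := by unfold rr; rw [pow_succ]; ring

theorem rr_le_one (n : ℕ) : rr n ≤ 1 := pow_le_one₀ (by norm_num) (by norm_num)

theorem rr_anti {m n : ℕ} (h : m ≤ n) : rr n ≤ rr m :=
  pow_le_pow_of_le_one (by norm_num) (by norm_num) h

theorem rr_lt {m n : ℕ} (h : m < n) : rr n ≤ rr m / 2 := by
  rw [← rr_succ]; exact rr_anti h

theorem exists_tile {x : ℝ} (h0 : 0 < x) (h1 : x ≤ 1) : ∃ n, rr n / 2 < x ∧ x ≤ rr n := by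
  obtain ⟨n, h2, h3⟩ := exists_nat_pow_near_of_lt_one h0 h1 (by norm_num : (0 : ℝ) < 1 / 2)
    (by norm_num)
  refine ⟨n, ?_, h3⟩
  rw [← rr_succ]; exact h2

/-- The piece in a tile of scale `r`, with half-width `δ` and height `h`. -/
def piece (r δ h : ℝ) : Set (ℝ × ℝ) :=
  {p | r / 2 ≤ p.1 ∧ p.1 ≤ r ∧ ((δ ≤ |p.1 - 3 / 4 * r| ∧ p.2 = 0) ∨
    (|p.1 - 3 / 4 * r| = δ ∧ 0 ≤ p.2 ∧ p.2 ≤ h) ∨ (|p.1 - 3 / 4 * r| ≤ δ ∧ p.2 = h))}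

/-- The dendrite determined by half-widths and heights. -/
def dendr (δ h : ℕ → ℝ) : Set (ℝ × ℝ) :=
  {p | (-1 ≤ p.1 ∧ p.1 ≤ 0 ∧ p.2 = 0) ∨ ∃ n, p ∈ piece (rr n) (δ n) (h n)}

/-- Clamp to the unit interval. -/
noncomputable def cl (u : ℝ) : ℝ := max 0 (min 1 u)

theorem cl_cont : Continuous cl := by unfold cl; fun_prop
theorem cl_nonneg (u : ℝ) : 0 ≤ cl u := le_max_left _ _
theorem cl_le_one (u : ℝ) : cl u ≤ 1 := max_le zero_le_one (min_le_left _ _)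
theorem cl_of_le {u : ℝ} (h : u ≤ 0) : cl u = 0 := max_eq_left ((min_le_right _ _).trans h)
theorem cl_of_ge {u : ℝ} (h : 1 ≤ u) : cl u = 1 := by unfold cl; rw [min_eq_left h]; simp
theorem cl_of_mem {u : ℝ} (h0 : 0 ≤ u) (h1 : u ≤ 1) : cl u = u := by
  unfold cl; rw [min_eq_right h1, max_eq_right h0]

/-- Local parameter. -/
noncomputable def uu (r t : ℝ) : ℝ := 5 * (2 * t / r - 1)

/-- Displacement in direction x. -/
noncomputable def XX (r δ t : ℝ) : ℝ :=
  (r / 4 - δ) * (cl (uu r t) + cl (uu r t - 4)) + 2 * δ * cl (uu r t - 2) - r / 2 * cl (uu r t / 5)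

/-- Displacement in direction y. -/
noncomputable def YY (r h t : ℝ) : ℝ := h * (cl (uu r t - 1) - cl (uu r t - 3))

theorem uu_ge {r t : ℝ} (hr : 0 < r) (h : r ≤ t) : 5 ≤ uu r t := by
  unfold uu
  have : 1 ≤ t / r := by rwa [le_div_iff₀ hr, one_mul]
  rw [mul_div_assoc]; linarith

theorem uu_le {r t : ℝ} (hr : 0 < r) (h : t ≤ r / 2) : uu r t ≤ 0 := by
  unfold uu
  have : t / r ≤ 1 / 2 := by rw [div_le_iff₀ hr]; linarith
  rw [mul_div_assoc]; linarith

theorem XX_ge {r δ t : ℝ} (hr : 0 < r) (h : r ≤ t) : XX r δ t = 0 := by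
  have := uu_ge hr h
  unfold XX
  rw [cl_of_ge, cl_of_ge, cl_of_ge, cl_of_ge] <;> linarith

theorem XX_le {r δ t : ℝ} (hr : 0 < r) (h : t ≤ r / 2) : XX r δ t = 0 := by
  have := uu_le hr h
  unfold XX
  rw [cl_of_le, cl_of_le, cl_of_le, cl_of_le] <;> linarith

theorem YY_ge {r δ t : ℝ} (hr : 0 < r) (h : r ≤ t) : YY r δ t = 0 := by
  have := uu_ge hr h
  unfold YY
  rw [cl_of_ge, cl_of_ge] <;> linarith

theorem YY_le {r δ t : ℝ} (hr : 0 < r) (h : t ≤ r / 2) : YY r δ t = 0 := by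
  have := uu_le hr h
  unfold YY
  rw [cl_of_le, cl_of_le] <;> linarith

theorem XX_bound {r δ t : ℝ} (hr : 0 < r) (h0 : 0 ≤ δ) (h1 : δ ≤ r / 8) : ‖XX r δ t‖ ≤ 2 * r := by
  unfold XX
  have a1 := cl_nonneg (uu r t)
  have a2 := cl_nonneg (uu r t - 4)
  have a3 := cl_nonneg (uu r t - 2)
  have a4 := cl_nonneg (uu r t / 5)
  have b1 := cl_le_one (uu r t)
  have b2 := cl_le_one (uu r t - 4)
  have b3 := cl_le_one (uu r t - 2)
  have b4 := cl_le_one (uu r t / 5)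
  rw [Real.norm_eq_abs, abs_le]
  have e1 : 0 ≤ (r / 4 - δ) * (cl (uu r t) + cl (uu r t - 4)) :=
    mul_nonneg (by linarith) (by linarith)
  have e2 : (r / 4 - δ) * (cl (uu r t) + cl (uu r t - 4)) ≤ (r / 4 - δ) * 2 :=
    mul_le_mul_of_nonneg_left (by linarith) (by linarith)
  have e3 : 0 ≤ 2 * δ * cl (uu r t - 2) := by positivity
  have e4 : 2 * δ * cl (uu r t - 2) ≤ 2 * δ * 1 :=
    mul_le_mul_of_nonneg_left (by linarith) (by linarith)
  have e5 : 0 ≤ r / 2 * cl (uu r t / 5) := by positivity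
  have e6 : r / 2 * cl (uu r t / 5) ≤ r / 2 * 1 :=
    mul_le_mul_of_nonneg_left (by linarith) (by linarith)
  constructor <;> linarith

theorem YY_bound {r h t : ℝ} (h0 : 0 ≤ h) (h1 : h ≤ r) : ‖YY r h t‖ ≤ 2 * r := by
  unfold YY
  have a1 := cl_nonneg (uu r t - 1)
  have a2 := cl_nonneg (uu r t - 3)
  have b1 := cl_le_one (uu r t - 1)
  have b2 := cl_le_one (uu r t - 3)
  rw [norm_mul, Real.norm_eq_abs, Real.norm_eq_abs, abs_of_nonneg h0]
  have : |cl (uu r t - 1) - cl (uu r t - 3)| ≤ 1 := by rw [abs_le]; constructor <;> linarith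
  nlinarith

/-- The parametrization of the dendrite. -/
noncomputable def gam (δ h : ℕ → ℝ) (t : ℝ) : ℝ × ℝ :=
  (t + ∑' n, XX (rr n) (δ n) t, ∑' n, YY (rr n) (h n) t)

theorem gam_cont {δ h : ℕ → ℝ} (hδ0 : ∀ n, 0 ≤ δ n) (hδ : ∀ n, δ n ≤ rr n / 8)
    (hh0 : ∀ n, 0 ≤ h n) (hh : ∀ n, h n ≤ rr n) : Continuous (gam δ h) := by
  have hu : Summable fun n => 2 * rr n := by
    unfold rr
    exact (summable_geometric_of_lt_one (by norm_num) (by norm_num)).mul_left 2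
  have hc := cl_cont
  have huu : ∀ r, Continuous (uu r) := by intro r; unfold uu; fun_prop
  refine Continuous.prodMk (continuous_id.add (continuous_tsum (fun n => ?_) hu
    (fun n t => XX_bound (rr_pos n) (hδ0 n) (hδ n))))
    (continuous_tsum (fun n => ?_) hu (fun n t => YY_bound (hh0 n) (hh n)))
  · have := huu (rr n)
    unfold XX
    fun_prop
  · have := huu (rr n)
    unfold YY
    fun_prop

theorem gam_nonpos {δ h : ℕ → ℝ} {t : ℝ} (ht : t ≤ 0) : gam δ h t = (t, 0) := by
  have h2 : ∀ n, t ≤ rr n / 2 := fun n => by have := rr_pos n; linarith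
  unfold gam
  simp [XX_le (rr_pos _) (h2 _), YY_le (rr_pos _) (h2 _)]

theorem gam_tile {δ h : ℕ → ℝ} {t : ℝ} {n : ℕ} (h1 : rr n / 2 ≤ t) (h2 : t ≤ rr n) :
    gam δ h t = (t + XX (rr n) (δ n) t, YY (rr n) (h n) t) := by
  unfold gam
  rw [tsum_eq_single n, tsum_eq_single n]
  · intro m hm
    rcases lt_or_gt_of_ne hm with hm | hm
    · exact YY_le (rr_pos m) (h2.trans (rr_lt hm))
    · exact YY_ge (rr_pos m) ((rr_lt hm).trans h1)
  · intro m hm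
    rcases lt_or_gt_of_ne hm with hm | hm
    · exact XX_le (rr_pos m) (h2.trans (rr_lt hm))
    · exact XX_ge (rr_pos m) ((rr_lt hm).trans h1)

/-- The polygonal path in a tile. -/
noncomputable def poly (r δ h u : ℝ) : ℝ × ℝ :=
  (r / 2 + (r / 4 - δ) * (cl u + cl (u - 4)) + 2 * δ * cl (u - 2), h * (cl (u - 1) - cl (u - 3)))

theorem tile_eq_poly {r δ h t : ℝ} (hr : 0 < r) (h1 : r / 2 ≤ t) (h2 : t ≤ r) :
    (t + XX r δ t, YY r h t) = poly r δ h (uu r t) := by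
  have hd : 1 / 2 ≤ t / r := by rw [le_div_iff₀ hr]; linarith
  have hd2 : t / r ≤ 1 := by rw [div_le_iff₀ hr]; linarith
  have he : t / r * r = t := by field_simp
  have hu : uu r t = 5 * (2 * (t / r) - 1) := by unfold uu; ring
  have hc : cl (uu r t / 5) = uu r t / 5 := cl_of_mem (by rw [hu]; linarith) (by rw [hu]; linarith)
  unfold poly YY XX
  refine Prod.ext ?_ rfl
  simp only [hc]
  have : r / 2 * (uu r t / 5) = t - r / 2 := by rw [hu]; linear_combination he
  rw [this]; ring

theorem poly_mem {r δ h u : ℝ} (hr : 0 < r) (hδ0 : 0 ≤ δ) (hδ : δ ≤ r / 8) (hh0 : 0 ≤ h)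
    (h0 : 0 ≤ u) (h5 : u ≤ 5) : poly r δ h u ∈ piece r δ h := by
  unfold poly piece
  simp only [mem_setOf_eq]
  rcases le_total u 1 with c1 | c1
  · rw [cl_of_mem h0 c1, cl_of_le (by linarith : u - 4 ≤ 0), cl_of_le (by linarith : u - 2 ≤ 0),
      cl_of_le (by linarith : u - 1 ≤ 0), cl_of_le (by linarith : u - 3 ≤ 0)]
    have e : 0 ≤ (r / 4 - δ) * u := mul_nonneg (by linarith) h0
    have e2 : (r / 4 - δ) * u ≤ (r / 4 - δ) * 1 := mul_le_mul_of_nonneg_left c1 (by linarith)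
    refine ⟨by linarith, by linarith, Or.inl ⟨?_, by ring⟩⟩
    rw [le_abs]; right; linarith
  rw [cl_of_ge c1]
  rcases le_total u 2 with c2 | c2
  · rw [cl_of_le (by linarith : u - 4 ≤ 0), cl_of_le (by linarith : u - 2 ≤ 0),
      cl_of_mem (by linarith : 0 ≤ u - 1) (by linarith), cl_of_le (by linarith : u - 3 ≤ 0)]
    refine ⟨by linarith, by linarith, Or.inr (Or.inl ⟨?_, ?_, ?_⟩)⟩
    · rw [show r / 2 + (r / 4 - δ) * (1 + 0) + 2 * δ * 0 - 3 / 4 * r = -δ by ring, abs_neg,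
        abs_of_nonneg hδ0]
    · exact mul_nonneg hh0 (by linarith)
    · nlinarith
  rw [cl_of_ge (by linarith : 1 ≤ u - 1)]
  rcases le_total u 3 with c3 | c3
  · rw [cl_of_le (by linarith : u - 4 ≤ 0), cl_of_mem (by linarith : 0 ≤ u - 2) (by linarith),
      cl_of_le (by linarith : u - 3 ≤ 0)]
    have e : 0 ≤ 2 * δ * (u - 2) := mul_nonneg (by linarith) (by linarith)
    have e2 : 2 * δ * (u - 2) ≤ 2 * δ * 1 := mul_le_mul_of_nonneg_left (by linarith) (by linarith)
    refine ⟨by linarith, by linarith, Or.inr (Or.inr ⟨?_, by ring⟩)⟩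
    rw [abs_le]; constructor <;> linarith
  rw [cl_of_ge (by linarith : 1 ≤ u - 2)]
  rcases le_total u 4 with c4 | c4
  · rw [cl_of_le (by linarith : u - 4 ≤ 0), cl_of_mem (by linarith : 0 ≤ u - 3) (by linarith)]
    refine ⟨by linarith, by linarith, Or.inr (Or.inl ⟨?_, ?_, ?_⟩)⟩
    · rw [show r / 2 + (r / 4 - δ) * (1 + 0) + 2 * δ * 1 - 3 / 4 * r = δ by ring,
        abs_of_nonneg hδ0]
    · exact mul_nonneg hh0 (by linarith)
    · nlinarith
  · rw [cl_of_mem (by linarith : 0 ≤ u - 4) (by linarith), cl_of_ge (by linarith : 1 ≤ u - 3)]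
    have e : 0 ≤ (r / 4 - δ) * (u - 4) := mul_nonneg (by linarith) (by linarith)
    have e2 : (r / 4 - δ) * (u - 4) ≤ (r / 4 - δ) * 1 :=
      mul_le_mul_of_nonneg_left (by linarith) (by linarith)
    refine ⟨by linarith, by linarith, Or.inl ⟨?_, by ring⟩⟩
    rw [le_abs]; left; linarith

theorem mem_poly {r δ h : ℝ} (hr : 0 < r) (hδ0 : 0 ≤ δ) (hδ : δ ≤ r / 8) (hh0 : 0 ≤ h)
    {p : ℝ × ℝ} (hp : p ∈ piece r δ h) : ∃ u, 0 ≤ u ∧ u ≤ 5 ∧ poly r δ h u = p := by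
  obtain ⟨x, y⟩ := p
  obtain ⟨h1, h2, hp⟩ := hp
  simp only at h1 h2 hp
  have hpos : 0 < r / 4 - δ := by linarith
  have vert : ∀ y, 0 ≤ y → y ≤ h → ∃ v, 0 ≤ v ∧ v ≤ 1 ∧ h * v = y := by
    intro y y0 yh
    rcases hh0.eq_or_lt with h' | h'
    · exact ⟨0, le_rfl, zero_le_one, by linarith⟩
    · exact ⟨y / h, by positivity, by rw [div_le_iff₀ h']; linarith, by field_simp⟩
  rcases hp with ⟨ha, hy⟩ | ⟨ha, hy0, hyh⟩ | ⟨ha, hy⟩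
  · rcases le_abs.1 ha with ha | ha
    · have q1 : 0 ≤ (x - 3 / 4 * r - δ) / (r / 4 - δ) := div_nonneg (by linarith) hpos.le
      have q2 : (x - 3 / 4 * r - δ) / (r / 4 - δ) ≤ 1 := by rw [div_le_iff₀ hpos]; linarith
      refine ⟨4 + (x - 3 / 4 * r - δ) / (r / 4 - δ), by linarith, by linarith, ?_⟩
      unfold poly
      rw [cl_of_ge, cl_of_mem, cl_of_ge, cl_of_ge, cl_of_ge] <;> try linarith
      refine Prod.ext ?_ (by simp [hy])
      have hq : (r / 4 - δ) * ((x - 3 / 4 * r - δ) / (r / 4 - δ)) = x - 3 / 4 * r - δ :=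
        mul_div_cancel₀ _ hpos.ne'
      simp only
      linear_combination hq
    · have q1 : 0 ≤ (x - r / 2) / (r / 4 - δ) := div_nonneg (by linarith) hpos.le
      have q2 : (x - r / 2) / (r / 4 - δ) ≤ 1 := by rw [div_le_iff₀ hpos]; linarith
      refine ⟨(x - r / 2) / (r / 4 - δ), by linarith, by linarith, ?_⟩
      unfold poly
      rw [cl_of_mem, cl_of_le, cl_of_le, cl_of_le, cl_of_le] <;> try linarith
      refine Prod.ext ?_ (by simp [hy])
      have hq : (r / 4 - δ) * ((x - r / 2) / (r / 4 - δ)) = x - r / 2 :=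
        mul_div_cancel₀ _ hpos.ne'
      simp only
      linear_combination hq
  · obtain ⟨v, v0, v1, hv⟩ := vert y hy0 hyh
    rcases (abs_eq hδ0).1 ha with ha | ha
    · refine ⟨4 - v, by linarith, by linarith, ?_⟩
      unfold poly
      rw [cl_of_ge, cl_of_le, cl_of_ge, cl_of_ge, cl_of_mem] <;> try linarith
      exact Prod.ext (by simp only; linarith) (by simp only; linarith)
    · refine ⟨1 + v, by linarith, by linarith, ?_⟩
      unfold poly
      rw [cl_of_ge, cl_of_le, cl_of_le, cl_of_mem, cl_of_le] <;> try linarith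
      exact Prod.ext (by simp only; linarith) (by simp only; linarith)
  · obtain ⟨ha1, ha2⟩ := abs_le.1 ha
    obtain ⟨v, v0, v1, hv⟩ : ∃ v, 0 ≤ v ∧ v ≤ 1 ∧ 2 * δ * v = x - (3 / 4 * r - δ) := by
      rcases hδ0.eq_or_lt with h' | h'
      · exact ⟨0, le_rfl, zero_le_one, by linarith⟩
      · exact ⟨(x - (3 / 4 * r - δ)) / (2 * δ), div_nonneg (by linarith) (by linarith),
          by rw [div_le_iff₀ (by linarith)]; linarith, by field_simp⟩
    refine ⟨2 + v, by linarith, by linarith, ?_⟩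
    unfold poly
    rw [cl_of_ge, cl_of_le, cl_of_mem, cl_of_ge, cl_of_le] <;> try linarith
    exact Prod.ext (by simp only; linarith) (by simp only; linarith)

theorem gam_image {δ h : ℕ → ℝ} (hδ0 : ∀ n, 0 ≤ δ n) (hδ : ∀ n, δ n ≤ rr n / 8)
    (hh0 : ∀ n, 0 ≤ h n) : gam δ h '' Icc (-1) 1 = dendr δ h := by
  ext p
  constructor
  · rintro ⟨t, ⟨ht1, ht2⟩, rfl⟩
    rcases le_or_gt t 0 with ht | ht
    · rw [gam_nonpos ht]; exact Or.inl ⟨ht1, ht, rfl⟩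
    · obtain ⟨n, h1, h2⟩ := exists_tile ht ht2
      rw [gam_tile h1.le h2, tile_eq_poly (rr_pos n) h1.le h2]
      have hr := rr_pos n
      refine Or.inr ⟨n, poly_mem hr (hδ0 n) (hδ n) (hh0 n) ?_ ?_⟩
      · unfold uu
        have : 1 / 2 ≤ t / rr n := by rw [le_div_iff₀ hr]; linarith
        rw [mul_div_assoc]; linarith
      · unfold uu
        have : t / rr n ≤ 1 := by rw [div_le_iff₀ hr]; linarith
        rw [mul_div_assoc]; linarith
  · rintro (⟨h1, h2, h3⟩ | ⟨n, hn⟩)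
    · exact ⟨p.1, ⟨h1, by linarith⟩, by rw [gam_nonpos h2, ← h3]⟩
    · obtain ⟨u, u0, u5, rfl⟩ := mem_poly (rr_pos n) (hδ0 n) (hδ n) (hh0 n) hn
      have hr := rr_pos n
      have hr1 := rr_le_one n
      have e0 : 0 ≤ rr n / 2 * (u / 5) := by positivity
      have e1 : rr n / 2 * (u / 5) ≤ rr n / 2 * 1 :=
        mul_le_mul_of_nonneg_left (by linarith) (by linarith)
      refine ⟨rr n / 2 + rr n / 2 * (u / 5), ⟨by linarith, by linarith⟩, ?_⟩
      rw [gam_tile (n := n) (by linarith) (by linarith),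
        tile_eq_poly hr (by linarith) (by linarith)]
      congr 1
      unfold uu
      field_simp
      ring

theorem piece_tile {δ h : ℕ → ℝ} {m n : ℕ} {p : ℝ × ℝ} (hp : p ∈ piece (rr m) (δ m) (h m))
    (h1 : rr n / 2 < p.1) (h2 : p.1 < rr n) : m = n := by
  obtain ⟨h3, h4, -⟩ := hp
  by_contra hne
  rcases lt_or_gt_of_ne hne with hm | hm
  · have := rr_lt hm; linarith
  · have := rr_lt hm; linarith

theorem dendr_tile {δ h : ℕ → ℝ} {n : ℕ} {p : ℝ × ℝ} (hp : p ∈ dendr δ h)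
    (h1 : rr n / 2 < p.1) (h2 : p.1 < rr n) : p ∈ piece (rr n) (δ n) (h n) := by
  rcases hp with ⟨_, h, _⟩ | ⟨m, hm⟩
  · have := rr_pos n; linarith
  · have := piece_tile hm h1 h2
    subst this; exact hm

theorem dendr_isDendrite {δ h : ℕ → ℝ} (hδ0 : ∀ n, 0 ≤ δ n) (hδ : ∀ n, δ n ≤ rr n / 8)
    (hh0 : ∀ n, 0 ≤ h n) (hh : ∀ n, h n ≤ rr n) : IsDendrite (dendr δ h) := by
  have hc := gam_cont hδ0 hδ hh0 hh
  have him := gam_image hδ0 hδ hh0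
  refine ⟨⟨?_, ?_⟩, locallyConnected_of_image _ hc him, ?_⟩
  · rw [← him]; exact isCompact_Icc.image hc
  · rw [← him]; exact (isConnected_Icc (by norm_num)).image _ hc.continuousOn
  · refine no_circle ((range rr) ∪ (range fun n => 3 / 4 * rr n + δ n) ∪
      (range fun n => 3 / 4 * rr n - δ n))
      (((countable_range _).union (countable_range _)).union (countable_range _)) ?_
    rintro ⟨x, y⟩ hp ⟨x', y'⟩ hq hpq hE
    simp only at hpq hE
    subst hpq
    simp only [mem_union, mem_range, not_or, not_exists] at hE
    obtain ⟨⟨hE1, hE2⟩, hE3⟩ := hE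
    refine Prod.ext rfl ?_
    rcases hp with ⟨_, h0, hy⟩ | ⟨n, hn⟩
    · rcases hq with ⟨_, _, hy'⟩ | ⟨m, hm⟩
      · exact hy.trans hy'.symm
      · have h1 := hm.1; have := rr_pos m; simp only at h0 h1; linarith
    · have hn1 : rr n / 2 < x := lt_of_le_of_ne hn.1 (by
        rw [← rr_succ]; exact hE1 _)
      have hn2 : x < rr n := lt_of_le_of_ne hn.2.1 (fun h => hE1 n h.symm)
      have hm := dendr_tile hq hn1 hn2
      have hne : |x - 3 / 4 * rr n| ≠ δ n := by
        intro h
        rcases (abs_eq (hδ0 n)).1 h with h | h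
        · exact hE2 n (by linarith)
        · exact hE3 n (by linarith)
      rcases hn.2.2 with ⟨a, b⟩ | ⟨a, b⟩ | ⟨a, b⟩ <;>
        rcases hm.2.2 with ⟨a', b'⟩ | ⟨a', b'⟩ | ⟨a', b'⟩
      · exact b.trans b'.symm
      · exact absurd a' hne
      · exact absurd (le_antisymm a' a) hne
      · exact absurd a hne
      · exact absurd a hne
      · exact absurd a hne
      · exact absurd (le_antisymm a a') hne
      · exact absurd a' hne
      · exact b.trans b'.symm

section PartC

theorem re_or {α : Type*} [Primcodable α] {p q : α → Prop} (hp : REPred p) (hq : REPred q) :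
    REPred fun a => p a ∨ q a := by
  obtain ⟨R, hR, h⟩ := exists_of_re hp
  obtain ⟨S, hS, h'⟩ := exists_of_re hq
  refine (re_of_exists (R := fun x : α × ℕ => R x ∨ S x) (cp_or hR hS)).of_eq fun a => ?_
  rw [h, h', exists_or]

theorem mem_ballOfCode {c : (ℚ × ℚ) × ℚ} {p : ℝ × ℝ} : p ∈ ballOfCode c ↔
    ((c.1.1 : ℝ) - c.2 < p.1 ∧ p.1 < c.1.1 + c.2) ∧
      ((c.1.2 : ℝ) - c.2 < p.2 ∧ p.2 < c.1.2 + c.2) := by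
  have : p ∈ ballOfCode c ↔ dist p (((c.1.1 : ℝ), (c.1.2 : ℝ)) : ℝ × ℝ) < (c.2 : ℝ) := Iff.rfl
  rw [this, Prod.dist_eq, max_lt_iff, Real.dist_eq, Real.dist_eq, abs_lt, abs_lt]
  constructor
  · rintro ⟨⟨h1, h2⟩, h3, h4⟩
    exact ⟨⟨by linarith, by linarith⟩, by linarith, by linarith⟩
  · rintro ⟨⟨h1, h2⟩, h3, h4⟩
    exact ⟨⟨by linarith, by linarith⟩, by linarith, by linarith⟩

theorem pi01_iff {F : Set (ℝ × ℝ)} : IsPi01Closed F ↔ ∃ W : (ℚ × ℚ) × ℚ → Prop, REPred W ∧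
    ∀ p, p ∉ F ↔ ∃ c, W c ∧ p ∈ ballOfCode c := by
  have key : ∀ W : (ℚ × ℚ) × ℚ → Prop, (F = Set.univ \ ⋃ c ∈ {c | W c}, ballOfCode c) ↔
      ∀ p, p ∉ F ↔ ∃ c, W c ∧ p ∈ ballOfCode c := by
    intro W
    rw [Set.ext_iff]
    refine forall_congr' fun p => ?_
    have : p ∈ Set.univ \ ⋃ c ∈ {c | W c}, ballOfCode c ↔ ¬ ∃ c, W c ∧ p ∈ ballOfCode c := by
      simp
    rw [this, not_iff_comm]
    exact iff_comm
  exact exists_congr fun W => and_congr_right fun _ => key W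

theorem pi01_inter {F G : Set (ℝ × ℝ)} (hF : IsPi01Closed F) (hG : IsPi01Closed G) :
    IsPi01Closed (F ∩ G) := by
  rw [pi01_iff] at *
  obtain ⟨W, hW, h⟩ := hF
  obtain ⟨W', hW', h'⟩ := hG
  refine ⟨_, re_or hW hW', fun p => ?_⟩
  rw [Set.mem_inter_iff, not_and_or, h, h', ← exists_or]
  exact exists_congr fun c => by tauto

/-- Complement of a computable union of open rectangles. -/
def rectC (V : ℕ → Prop) (a b c d : ℕ → ℚ) : Set (ℝ × ℝ) :=
  {p | ∀ i, V i → ¬ (((a i : ℝ) < p.1 ∧ p.1 < b i) ∧ ((c i : ℝ) < p.2 ∧ p.2 < d i))}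

theorem pi01_rect {V : ℕ → Prop} {a b c d : ℕ → ℚ} (hV : ComputablePred V) (ha : CompRat a)
    (hb : CompRat b) (hc : CompRat c) (hd : CompRat d) : IsPi01Closed (rectC V a b c d) := by
  rw [pi01_iff]
  refine ⟨fun x => ∃ i, (V i ∧ ((a i ≤ x.1.1 - x.2 ∧ x.1.1 + x.2 ≤ b i) ∧
    (c i ≤ x.1.2 - x.2 ∧ x.1.2 + x.2 ≤ d i))), ?_, fun p => ?_⟩
  · have q1 : CompRat fun x : ((ℚ × ℚ) × ℚ) × ℕ => x.1.1.1 :=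
      CompRat.of_computable (Computable.fst.comp (Computable.fst.comp Computable.fst))
    have q2 : CompRat fun x : ((ℚ × ℚ) × ℚ) × ℕ => x.1.1.2 :=
      CompRat.of_computable (Computable.snd.comp (Computable.fst.comp Computable.fst))
    have q3 : CompRat fun x : ((ℚ × ℚ) × ℚ) × ℕ => x.1.2 :=
      CompRat.of_computable (Computable.snd.comp Computable.fst)
    refine re_of_exists (R := fun x : ((ℚ × ℚ) × ℚ) × ℕ => V x.2 ∧
      ((a x.2 ≤ x.1.1.1 - x.1.2 ∧ x.1.1.1 + x.1.2 ≤ b x.2) ∧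
      (c x.2 ≤ x.1.1.2 - x.1.2 ∧ x.1.1.2 + x.1.2 ≤ d x.2))) ?_
    exact cp_and (cp_comp hV Computable.snd) (cp_and
      (cp_and ((ha.comp Computable.snd).le (q1.sub q3)) ((q1.add q3).le (hb.comp Computable.snd)))
      (cp_and ((hc.comp Computable.snd).le (q2.sub q3)) ((q2.add q3).le (hd.comp Computable.snd))))
  · have e : p ∈ rectC V a b c d ↔ ∀ i, V i →
      ¬ (((a i : ℝ) < p.1 ∧ p.1 < b i) ∧ ((c i : ℝ) < p.2 ∧ p.2 < d i)) := Iff.rfl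
    rw [e]
    push Not
    constructor
    · rintro ⟨i, hi, ⟨h1, h2⟩, h3, h4⟩
      obtain ⟨η, hη, e1, e2, e3, e4⟩ : ∃ η : ℝ, 0 < η ∧ η ≤ p.1 - a i ∧ η ≤ b i - p.1 ∧
          η ≤ p.2 - c i ∧ η ≤ d i - p.2 := by
        refine ⟨min (min (p.1 - a i) (b i - p.1)) (min (p.2 - c i) (d i - p.2)),
          lt_min (lt_min (by linarith) (by linarith)) (lt_min (by linarith) (by linarith)),
          (min_le_left _ _).trans (min_le_left _ _), (min_le_left _ _).trans (min_le_right _ _),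
          (min_le_right _ _).trans (min_le_left _ _), (min_le_right _ _).trans (min_le_right _ _)⟩
      obtain ⟨r, r0, r1⟩ := exists_rat_btwn (show (0 : ℝ) < η / 2 by linarith)
      obtain ⟨q, q0, q1⟩ := exists_rat_btwn (show p.1 - r < p.1 + r by linarith)
      obtain ⟨q', q0', q1'⟩ := exists_rat_btwn (show p.2 - r < p.2 + r by linarith)
      refine ⟨((q, q'), r), ⟨i, hi, ?_⟩, mem_ballOfCode.2 ?_⟩
      · simp only [← Rat.cast_le (K := ℝ)]
        push_cast
        exact ⟨⟨by linarith, by linarith⟩, by linarith, by linarith⟩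
      · exact ⟨⟨by simp only; linarith, by simp only; linarith⟩, by simp only; linarith,
          by simp only; linarith⟩
    · rintro ⟨x, ⟨i, hi, h⟩, hp⟩
      simp only [← Rat.cast_le (K := ℝ)] at h
      push_cast at h
      rw [mem_ballOfCode] at hp
      exact ⟨i, hi, ⟨by linarith [h.1.1], by linarith [h.1.2]⟩, by linarith [h.2.1],
        by linarith [h.2.2]⟩

/-- Stage `s` of the `n`-th program on input `n`. -/
def vv (n s : ℕ) : Option ℕ :=
  Nat.Partrec.Code.evaln s (Denumerable.ofNat Nat.Partrec.Code n) n

theorem computable_vv {f g : ℕ → ℕ} (hf : Computable f) (hg : Computable g) :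
    Computable fun i => vv (f i) (g i) :=
  Nat.Partrec.Code.primrec_evaln.to_comp.comp
    ((hg.pair ((Computable.ofNat _).comp hf)).pair hf)

theorem vv_zero (n : ℕ) : vv n 0 = none := by
  cases h : vv n 0 with
  | none => rfl
  | some y => exact absurd (Nat.Partrec.Code.evaln_bound h) (Nat.not_lt_zero n)

theorem vv_mono {n s t y : ℕ} (h : s ≤ t) (hs : vv n s = some y) : vv n t = some y :=
  Nat.Partrec.Code.evaln_mono h hs

theorem vv_none_mono {n s t : ℕ} (h : s ≤ t) (ht : vv n t = none) : vv n s = none := by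
  cases hs : vv n s with
  | none => rfl
  | some y => rw [vv_mono h hs] at ht; cases ht

theorem vv_uniq {n s t y z : ℕ} (hs : vv n s = some y) (ht : vv n t = some z) : y = z := by
  have h1 := vv_mono (le_max_left s t) hs
  have h2 := vv_mono (le_max_right s t) ht
  rw [h1] at h2
  exact Option.some.inj h2

/-- The parameters chosen at tile `n`. -/
def Fate (n : ℕ) (δ h : ℝ) : Prop :=
  ((∀ s, vv n s = none) ∧ δ = 0 ∧ h = rr n) ∨
  ((∃ s, vv n s = some 0) ∧ δ = 0 ∧ h = 0) ∨
  ∃ s j, vv n s = none ∧ vv n (s + 1) = some (j + 1) ∧ δ = rr n * rr s / 8 ∧ h = rr n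

theorem exists_fate (n : ℕ) : ∃ x : ℝ × ℝ, Fate n x.1 x.2 := by
  by_cases h : ∀ s, vv n s = none
  · exact ⟨(0, rr n), Or.inl ⟨h, rfl, rfl⟩⟩
  · classical
    push Not at h
    have hs := Nat.find_spec h
    have hm := fun m => Nat.find_min h (m := m)
    obtain ⟨y, hy⟩ := Option.ne_none_iff_exists'.1 hs
    cases y with
    | zero => exact ⟨(0, 0), Or.inr (Or.inl ⟨⟨_, hy⟩, rfl, rfl⟩)⟩
    | succ j =>
      generalize Nat.find h = k at *
      cases k with
      | zero => exact absurd (vv_zero n) hs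
      | succ k => exact ⟨(_, _), Or.inr (Or.inr ⟨k, j, not_not.1 (hm k (Nat.lt_succ_self k)), hy,
          rfl, rfl⟩)⟩

theorem fate_bounds {n : ℕ} {δ h : ℝ} (hf : Fate n δ h) :
    0 ≤ δ ∧ δ ≤ rr n / 8 ∧ 0 ≤ h ∧ h ≤ rr n := by
  have hr := rr_pos n
  rcases hf with ⟨-, rfl, rfl⟩ | ⟨-, rfl, rfl⟩ | ⟨s, j, -, -, rfl, rfl⟩
  · exact ⟨le_rfl, by linarith, hr.le, le_rfl⟩
  · exact ⟨le_rfl, by linarith, le_rfl, hr.le⟩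
  · have := rr_pos s
    have h1 : rr n * rr s ≤ rr n * 1 := mul_le_mul_of_nonneg_left (rr_le_one s) hr.le
    exact ⟨by positivity, by linarith, hr.le, le_rfl⟩

theorem fate_none {n s : ℕ} {δ h : ℝ} (hf : Fate n δ h) (hs : vv n s = none) (hh : h ≠ 0) :
    δ ≤ rr n * rr s / 8 := by
  have hr := rr_pos n
  have hr' := rr_pos s
  rcases hf with ⟨-, rfl, rfl⟩ | ⟨-, rfl, rfl⟩ | ⟨s', j, h1, h2, rfl, rfl⟩
  · positivity
  · positivity
  · have : s ≤ s' := by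
      by_contra hlt
      rw [vv_mono (by omega : s' + 1 ≤ s) h2] at hs
      cases hs
    have := mul_le_mul_of_nonneg_left (rr_anti this) hr.le
    linarith

theorem fate_zero {n s : ℕ} {δ h : ℝ} (hf : Fate n δ h) (hs : vv n s = some 0) : h = 0 := by
  rcases hf with ⟨h1, rfl, rfl⟩ | ⟨-, rfl, rfl⟩ | ⟨s', j, h1, h2, rfl, rfl⟩
  · rw [h1] at hs; cases hs
  · rfl
  · exact absurd (vv_uniq hs h2) (by omega)

theorem fate_succ {n s j : ℕ} {δ h : ℝ} (hf : Fate n δ h) (hs : vv n s = none)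
    (hs' : vv n (s + 1) = some (j + 1)) : δ = rr n * rr s / 8 ∧ h = rr n := by
  rcases hf with ⟨h1, rfl, rfl⟩ | ⟨⟨t, ht⟩, rfl, rfl⟩ | ⟨s', j', h1, h2, rfl, rfl⟩
  · rw [h1] at hs'; cases hs'
  · exact absurd (vv_uniq ht hs') (by omega)
  · have e : s = s' := by
      rcases lt_trichotomy s s' with hlt | rfl | hlt
      · rw [vv_mono (by omega : s + 1 ≤ s') hs'] at h1; cases h1
      · rfl
      · rw [vv_mono (by omega : s' + 1 ≤ s) h2] at hs; cases hs
    subst e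
    exact ⟨rfl, rfl⟩

theorem fate_succ' {n s j : ℕ} {δ h : ℝ} (hf : Fate n δ h)
    (hs : vv n s = some (j + 1)) : 0 < δ ∧ h = rr n := by
  rcases hf with ⟨h1, rfl, rfl⟩ | ⟨⟨t, ht⟩, rfl, rfl⟩ | ⟨s', j', h1, h2, rfl, rfl⟩
  · rw [h1] at hs; cases hs
  · exact absurd (vv_uniq ht hs) (by omega)
  · have := rr_pos n
    have := rr_pos s'
    exact ⟨by positivity, rfl⟩

end PartC

section PartD

/-- First component of a triple code. -/
def nI (i : ℕ) : ℕ := i.unpair.1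
/-- Second component of a triple code. -/
def sI (i : ℕ) : ℕ := i.unpair.2.unpair.1
/-- Third component of a triple code. -/
def mI (i : ℕ) : ℕ := i.unpair.2.unpair.2

theorem nI_comp : Computable nI := Computable.fst.comp Primrec.unpair.to_comp
theorem sI_comp : Computable sI :=
  Computable.fst.comp (Primrec.unpair.to_comp.comp (Computable.snd.comp Primrec.unpair.to_comp))
theorem mI_comp : Computable mI :=
  Computable.snd.comp (Primrec.unpair.to_comp.comp (Computable.snd.comp Primrec.unpair.to_comp))

theorem ix_surj (n s m : ℕ) : ∃ i, nI i = n ∧ sI i = s ∧ mI i = m :=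
  ⟨Nat.pair n (Nat.pair s m), by simp [nI], by simp [sI], by simp [mI]⟩

/-- Real-valued functions of triples which are computable and rational valued. -/
def CR (a : ℕ → ℕ → ℕ → ℝ) : Prop :=
  ∃ f : ℕ → ℚ, CompRat f ∧ ∀ i, (f i : ℝ) = a (nI i) (sI i) (mI i)

theorem CR.add {a b : ℕ → ℕ → ℕ → ℝ} (ha : CR a) (hb : CR b) :
    CR fun n s m => a n s m + b n s m := by
  obtain ⟨f, hf, h⟩ := ha
  obtain ⟨g, hg, h'⟩ := hb
  exact ⟨_, hf.add hg, fun i => by push_cast; rw [h, h']⟩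

theorem CR.sub {a b : ℕ → ℕ → ℕ → ℝ} (ha : CR a) (hb : CR b) :
    CR fun n s m => a n s m - b n s m := by
  obtain ⟨f, hf, h⟩ := ha
  obtain ⟨g, hg, h'⟩ := hb
  exact ⟨_, hf.sub hg, fun i => by push_cast; rw [h, h']⟩

theorem CR.mul {a b : ℕ → ℕ → ℕ → ℝ} (ha : CR a) (hb : CR b) :
    CR fun n s m => a n s m * b n s m := by
  obtain ⟨f, hf, h⟩ := ha
  obtain ⟨g, hg, h'⟩ := hb
  exact ⟨_, hf.mul hg, fun i => by push_cast; rw [h, h']⟩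

theorem CR.const (q : ℚ) : CR fun _ _ _ => (q : ℝ) := ⟨_, CompRat.const q, fun _ => rfl⟩

theorem CR.rrn : CR fun n _ _ => rr n :=
  ⟨_, CompRat.half_pow nI_comp, fun i => by unfold rr; push_cast; rfl⟩

theorem CR.rrs : CR fun _ s _ => rr s :=
  ⟨_, CompRat.half_pow sI_comp, fun i => by unfold rr; push_cast; rfl⟩

theorem CR.m : CR fun _ _ m => (m : ℝ) :=
  ⟨_, CompRat.natCast mI_comp, fun i => by push_cast; rfl⟩

theorem CR.of_eq {a b : ℕ → ℕ → ℕ → ℝ} (ha : CR a) (h : ∀ n s m, a n s m = b n s m) : CR b := by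
  have : a = b := by funext n s m; exact h n s m
  rwa [← this]

/-- Complement of a union of rectangles indexed by triples. -/
def rect3 (V : ℕ → ℕ → ℕ → Prop) (a b c d : ℕ → ℕ → ℕ → ℝ) : Set (ℝ × ℝ) :=
  {p | ∀ n s m, V n s m → a n s m < p.1 → p.1 < b n s m → c n s m < p.2 → p.2 < d n s m → False}

theorem pi01_rect3 {V : ℕ → ℕ → ℕ → Prop} {a b c d : ℕ → ℕ → ℕ → ℝ}
    (hV : ComputablePred fun i => V (nI i) (sI i) (mI i)) (ha : CR a) (hb : CR b) (hc : CR c)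
    (hd : CR d) : IsPi01Closed (rect3 V a b c d) := by
  obtain ⟨a', ha, ha'⟩ := ha
  obtain ⟨b', hb, hb'⟩ := hb
  obtain ⟨c', hc, hc'⟩ := hc
  obtain ⟨d', hd, hd'⟩ := hd
  have := pi01_rect hV ha hb hc hd
  convert this using 1
  ext p
  constructor
  · rintro h i hi ⟨⟨h1, h2⟩, h3, h4⟩
    rw [ha'] at h1
    rw [hb'] at h2
    rw [hc'] at h3
    rw [hd'] at h4
    exact h _ _ _ hi h1 h2 h3 h4
  · intro h n s m hV h1 h2 h3 h4
    obtain ⟨i, rfl, rfl, rfl⟩ := ix_surj n s m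
    rw [← ha'] at h1
    rw [← hb'] at h2
    rw [← hc'] at h3
    rw [← hd'] at h4
    exact h i hV ⟨⟨h1, h2⟩, h3, h4⟩

theorem cp_true : ComputablePred fun _ : ℕ => True :=
  (cp_eq (Computable.const 0) (Computable.const 0)).of_eq fun _ => by simp

theorem cp_none : ComputablePred fun i => vv (nI i) (sI i) = none :=
  cp_eq (computable_vv nI_comp sI_comp) (Computable.const none)

theorem cp_zero : ComputablePred fun i => vv (nI i) (sI i) = some 0 :=
  cp_eq (computable_vv nI_comp sI_comp) (Computable.const (some 0))

theorem cp_succ : ComputablePred fun i => vv (nI i) (sI i) = none ∧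
    ∃ j, vv (nI i) (sI i + 1) = some (j + 1) := by
  have hs : Computable fun i => sI i + 1 := Computable.succ.comp sI_comp
  have h := computable_vv nI_comp hs
  refine cp_and cp_none ((cp_and (cp_eq h (Computable.const none)).not
    (cp_eq h (Computable.const (some 0))).not).of_eq fun i => ?_)
  cases vv (nI i) (sI i + 1) with
  | none => simp
  | some y => cases y <;> simp

/-- Points of the dendrite off the axis. -/
theorem dendr_cases {δ h : ℕ → ℝ} (hf : ∀ n, Fate n (δ n) (h n)) {p : ℝ × ℝ}
    (hp : p ∈ dendr δ h) : -1 ≤ p.1 ∧ p.1 ≤ 1 ∧ 0 ≤ p.2 ∧ (0 < p.2 → ∃ n, p ∈ piece (rr n) (δ n) (h n)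
      ∧ |p.1 - 3 / 4 * rr n| ≤ δ n ∧ p.2 ≤ h n) := by
  rcases hp with ⟨h1, h2, h3⟩ | ⟨n, hn⟩
  · exact ⟨h1, by linarith, h3.ge, fun h => absurd h3 h.ne'⟩
  · obtain ⟨d0, d1, h0, h1⟩ := fate_bounds (hf n)
    have hr := rr_pos n
    have hr1 := rr_le_one n
    have hn' := hn
    obtain ⟨e1, e2, hn⟩ := hn
    refine ⟨by linarith, by linarith, ?_, ?_⟩
    · rcases hn with ⟨-, hy⟩ | ⟨-, hy, -⟩ | ⟨-, hy⟩
      · exact hy.ge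
      · exact hy
      · exact hy ▸ h0
    · intro hpos
      refine ⟨n, hn', ?_⟩
      rcases hn with ⟨-, hy⟩ | ⟨ha, -, hy⟩ | ⟨ha, hy⟩
      · exact absurd hy hpos.ne'
      · exact ⟨ha.le, hy⟩
      · exact ⟨ha, hy.le⟩

theorem dendr_eq {δ h : ℕ → ℝ} (hf : ∀ n, Fate n (δ n) (h n)) : dendr δ h =
    rect3 (fun _ _ _ => True) (fun _ _ m => -1 * m) (fun _ _ m => m) (fun _ _ m => -1 * m)
      (fun _ _ _ => 0) ∩
    (rect3 (fun _ _ _ => True) (fun _ _ m => -1 * m) (fun _ _ _ => -1) (fun _ _ m => -1 * m)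
      (fun _ _ m => m) ∩
    (rect3 (fun _ _ _ => True) (fun _ _ _ => 1) (fun _ _ m => m) (fun _ _ m => -1 * m)
      (fun _ _ m => m) ∩
    (rect3 (fun _ _ _ => True) (fun _ _ m => -1 * m) (fun n _ _ => rr n) (fun n _ _ => rr n)
      (fun _ _ m => m) ∩
    (rect3 (fun _ _ _ => True) (fun n _ _ => 7 / 16 * rr n) (fun n _ _ => 5 / 8 * rr n)
      (fun _ _ _ => 0) (fun _ _ m => m) ∩
    (rect3 (fun _ _ _ => True) (fun _ _ _ => 7 / 8) (fun _ _ m => m)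
      (fun _ _ _ => 0) (fun _ _ m => m) ∩
    (rect3 (fun n s _ => vv n s = none) (fun n s _ => 3 / 4 * rr n + 1 / 8 * (rr n * rr s))
      (fun n _ _ => rr n) (fun _ _ _ => 0) (fun _ _ m => m) ∩
    (rect3 (fun n s _ => vv n s = none) (fun n _ _ => 1 / 2 * rr n)
      (fun n s _ => 3 / 4 * rr n - 1 / 8 * (rr n * rr s)) (fun _ _ _ => 0) (fun _ _ m => m) ∩
    (rect3 (fun n s _ => vv n s = some 0) (fun n _ _ => 1 / 2 * rr n)
      (fun n _ _ => rr n) (fun _ _ _ => 0) (fun _ _ m => m) ∩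
    rect3 (fun n s _ => vv n s = none ∧ ∃ j, vv n (s + 1) = some (j + 1))
      (fun n s _ => 3 / 4 * rr n - 1 / 8 * (rr n * rr s))
      (fun n s _ => 3 / 4 * rr n + 1 / 8 * (rr n * rr s)) (fun _ _ _ => -1)
      (fun n _ _ => rr n))))))))) := by
  ext p
  constructor
  · intro hp
    obtain ⟨x0, x1, y0, hpos⟩ := dendr_cases hf hp
    have hb := fun n => fate_bounds (hf n)
    refine ⟨?_, ?_, ?_, ?_, ?_, ?_, ?_, ?_, ?_, ?_⟩ <;> intro n s m hV h1 h2 h3 h4 <;>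
      simp only at hV h1 h2 h3 h4
    · linarith
    · linarith
    · linarith
    · obtain ⟨k, hk, e1, e2⟩ := hpos (by linarith [rr_pos n])
      have hkn : k < n := by
        by_contra hlt
        have := rr_anti (not_lt.1 hlt)
        linarith [(hb k).2.2.2]
      have := rr_lt hkn
      linarith [hk.1]
    · obtain ⟨k, hk, e1, e2⟩ := hpos h3
      obtain ⟨e3, e4⟩ := abs_le.1 e1
      have := (hb k).2.1
      rcases lt_trichotomy k n with hkn | rfl | hkn
      · have := rr_lt hkn
        have := rr_pos n
        linarith
      · linarith
      · have := rr_lt hkn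
        linarith
    · obtain ⟨k, hk, e1, e2⟩ := hpos h3
      obtain ⟨e3, e4⟩ := abs_le.1 e1
      have := (hb k).2.1
      have := rr_le_one k
      linarith
    · obtain ⟨k, hk, e1, e2⟩ := hpos h3
      have hr := rr_pos n
      have hr' := rr_pos s
      have : 0 < rr n * rr s := by positivity
      have hkn : k = n := piece_tile hk (by linarith) (by linarith)
      subst hkn
      have := fate_none (hf k) hV (by linarith)
      obtain ⟨e3, e4⟩ := abs_le.1 e1
      linarith
    · obtain ⟨k, hk, e1, e2⟩ := hpos h3
      have hr := rr_pos n
      have hr' := rr_pos s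
      have : 0 < rr n * rr s := by positivity
      have hkn : k = n := piece_tile hk (by linarith) (by linarith)
      subst hkn
      have := fate_none (hf k) hV (by linarith)
      obtain ⟨e3, e4⟩ := abs_le.1 e1
      linarith
    · obtain ⟨k, hk, e1, e2⟩ := hpos h3
      have hkn : k = n := piece_tile hk (by linarith) (by linarith)
      subst hkn
      have := fate_zero (hf k) hV
      linarith
    · obtain ⟨hv, j, hj⟩ := hV
      obtain ⟨f1, f2⟩ := fate_succ (hf n) hv hj
      have hr := rr_pos n
      have : rr n * rr s ≤ rr n * 1 := mul_le_mul_of_nonneg_left (rr_le_one s) hr.le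
      have hk := dendr_tile hp (n := n) (by linarith) (by linarith)
      have hlt : |p.1 - 3 / 4 * rr n| < δ n := abs_lt.2 ⟨by linarith, by linarith⟩
      obtain ⟨-, -, ⟨h, -⟩ | ⟨h, -⟩ | ⟨-, h⟩⟩ := hk
      · linarith
      · linarith
      · linarith
  · rintro ⟨F1, F2, F3, F4, F5, F6, F7, F8, F9, F10⟩
    obtain ⟨m, hm⟩ := exists_nat_gt (max |p.1| |p.2|)
    obtain ⟨mx, my⟩ := max_lt_iff.1 hm
    obtain ⟨mx0, mx1⟩ := abs_lt.1 mx
    obtain ⟨my0, my1⟩ := abs_lt.1 my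
    have mx0' : -1 * (m : ℝ) < p.1 := by linarith
    have my0' : -1 * (m : ℝ) < p.2 := by linarith
    have y0 : 0 ≤ p.2 := not_lt.1 fun h => F1 0 0 m trivial mx0' mx1 my0' h
    have x0 : -1 ≤ p.1 := not_lt.1 fun h => F2 0 0 m trivial mx0' h my0' my1
    have x1 : p.1 ≤ 1 := not_lt.1 fun h => F3 0 0 m trivial h mx1 my0' my1
    rcases le_or_gt p.1 0 with hx | hx
    · left
      refine ⟨x0, hx, le_antisymm (not_lt.1 fun h => ?_) y0⟩
      obtain ⟨n, hn⟩ := exists_pow_lt_of_lt_one h (by norm_num : (1 / 2 : ℝ) < 1)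
      exact F4 n 0 m trivial mx0' (lt_of_le_of_lt hx (rr_pos n)) hn my1
    · right
      obtain ⟨n, t1, t2⟩ := exists_tile hx x1
      have hr := rr_pos n
      refine ⟨n, t1.le, t2, ?_⟩
      have hb := fate_bounds (hf n)
      have hF10 : ∀ s j, vv n s = none → vv n (s + 1) = some (j + 1) →
          |p.1 - 3 / 4 * rr n| < rr n * rr s / 8 → rr n ≤ p.2 := by
        intro s j h1 h2 h3
        obtain ⟨h4, h5⟩ := abs_lt.1 h3
        exact not_lt.1 fun h => F10 n s m ⟨h1, j, h2⟩ (by simp only; linarith)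
          (by simp only; linarith) (by simp only; linarith) h
      rcases y0.eq_or_lt with hy | hy
      · left
        refine ⟨?_, hy.symm⟩
        rcases hf n with ⟨-, h1, -⟩ | ⟨-, h1, -⟩ | ⟨s, j, h1, h2, h3, h4⟩
        · rw [h1]; exact abs_nonneg _
        · rw [h1]; exact abs_nonneg _
        · by_contra hlt
          rw [not_le, h3] at hlt
          linarith [hF10 s j h1 h2 hlt]
      · have t3 : p.1 < rr n := by
          refine lt_of_le_of_ne t2 fun heq => ?_
          cases n with
          | zero =>
            have : rr 0 = 1 := by simp [rr]
            exact F6 0 0 m trivial (by simp only; linarith) mx1 hy my1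
          | succ k =>
            have := rr_succ k
            have := rr_pos k
            exact F5 k 0 m trivial (by simp only; linarith) (by simp only; linarith) hy my1
        have yu : p.2 ≤ rr n := not_lt.1 fun h => F4 n 0 m trivial mx0' t3 h my1
        have hF78 : ∀ s, vv n s = none → |p.1 - 3 / 4 * rr n| ≤ rr n * rr s / 8 := by
          intro s hs
          have A := not_lt.1 fun h => F7 n s m hs h t3 hy my1
          have B := not_lt.1 fun h => F8 n s m hs (by simp only; linarith) h hy my1
          simp only at A B
          exact abs_le.2 ⟨by linarith, by linarith⟩
        rcases hf n with ⟨h0, h1, h2⟩ | ⟨⟨s, hs⟩, h1, -⟩ | ⟨s, j, h1, h2, h3, h4⟩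
        · right; left
          rw [h1, h2]
          refine ⟨le_antisymm (le_of_forall_pos_lt_add fun η hη => ?_) (abs_nonneg _), y0, yu⟩
          obtain ⟨s, hs⟩ := exists_pow_lt_of_lt_one hη (by norm_num : (1 / 2 : ℝ) < 1)
          have hs' : rr s < η := hs
          have := hF78 s (h0 s)
          have hrs := rr_pos s
          have : rr n * rr s ≤ 1 * rr s := mul_le_mul_of_nonneg_right (rr_le_one n) hrs.le
          linarith
        · exact (F9 n s m hs (by simp only; linarith) t3 hy my1).elim
        · right
          rw [h3, h4]
          have A := hF78 s h1
          rcases A.eq_or_lt with A' | A'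
          · exact Or.inl ⟨A', y0, yu⟩
          · exact Or.inr ⟨A, le_antisymm yu (hF10 s j h1 h2 A')⟩

theorem dendr_pi01 {δ h : ℕ → ℝ} (hf : ∀ n, Fate n (δ n) (h n)) : IsPi01Closed (dendr δ h) := by
  rw [dendr_eq hf]
  have c0 : CR fun _ _ _ => 0 := (CR.const 0).of_eq fun _ _ _ => by norm_num
  have c1 : CR fun _ _ _ => 1 := (CR.const 1).of_eq fun _ _ _ => by norm_num
  have cm1 : CR fun _ _ _ => -1 := (CR.const (-1)).of_eq fun _ _ _ => by norm_num
  have c2 : CR fun _ _ _ => 7 / 16 := (CR.const (7 / 16)).of_eq fun _ _ _ => by norm_num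
  have c3 : CR fun _ _ _ => 5 / 8 := (CR.const (5 / 8)).of_eq fun _ _ _ => by norm_num
  have c4 : CR fun _ _ _ => 7 / 8 := (CR.const (7 / 8)).of_eq fun _ _ _ => by norm_num
  have c5 : CR fun _ _ _ => 3 / 4 := (CR.const (3 / 4)).of_eq fun _ _ _ => by norm_num
  have c6 : CR fun _ _ _ => 1 / 8 := (CR.const (1 / 8)).of_eq fun _ _ _ => by norm_num
  have c7 : CR fun _ _ _ => 1 / 2 := (CR.const (1 / 2)).of_eq fun _ _ _ => by norm_num
  have cm := cm1.mul CR.m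
  have ce := c6.mul (CR.rrn.mul CR.rrs)
  have cx := c5.mul CR.rrn
  refine pi01_inter (pi01_rect3 cp_true cm CR.m cm c0) ?_
  refine pi01_inter (pi01_rect3 cp_true cm cm1 cm CR.m) ?_
  refine pi01_inter (pi01_rect3 cp_true c1 CR.m cm CR.m) ?_
  refine pi01_inter (pi01_rect3 cp_true cm CR.rrn CR.rrn CR.m) ?_
  refine pi01_inter (pi01_rect3 cp_true (c2.mul CR.rrn) (c3.mul CR.rrn) c0 CR.m) ?_
  refine pi01_inter (pi01_rect3 cp_true c4 CR.m c0 CR.m) ?_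
  refine pi01_inter (pi01_rect3 cp_none (cx.add ce) CR.rrn c0 CR.m) ?_
  refine pi01_inter (pi01_rect3 cp_none (c7.mul CR.rrn) (cx.sub ce) c0 CR.m) ?_
  refine pi01_inter (pi01_rect3 cp_zero (c7.mul CR.rrn) CR.rrn c0 CR.m) ?_
  exact pi01_rect3 cp_succ (cx.sub ce) (cx.add ce) cm1 CR.rrn

end PartD

section PartE

theorem diag {δ h : ℕ → ℝ} (hf : ∀ n, Fate n (δ n) (h n)) {J : Set (ℝ × ℝ)} (hJ : J ⊆ dendr δ h)
    (hc : IsComputableClosed J) (hd : IsDendrite J) (hH : IsDendrite (dendr δ h)) :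
    1 / 8 ≤ Metric.hausdorffDist J (dendr δ h) := by
  by_contra hlt
  rw [not_le] at hlt
  have hfin : Metric.hausdorffEDist (dendr δ h) J ≠ ⊤ :=
    Metric.hausdorffEDist_ne_top_of_nonempty_of_bounded hH.1.2.nonempty hd.1.2.nonempty
      hH.1.1.isBounded hd.1.1.isBounded
  have near : ∀ q ∈ dendr δ h, ∃ p ∈ J, dist q p < 1 / 8 := by
    intro q hq
    rw [Metric.hausdorffDist_comm] at hlt
    exact Metric.exists_dist_lt_of_hausdorffDist_lt hq hlt hfin
  have hL : ((-1, 0) : ℝ × ℝ) ∈ dendr δ h := Or.inl ⟨le_rfl, by norm_num, rfl⟩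
  have hR : ((1, 0) : ℝ × ℝ) ∈ dendr δ h := by
    refine Or.inr ⟨0, ?_⟩
    have hb := fate_bounds (hf 0)
    have r0 : rr 0 = 1 := by simp [rr]
    rw [r0] at hb ⊢
    refine ⟨by norm_num, by norm_num, Or.inl ⟨?_, rfl⟩⟩
    rw [abs_of_pos (by norm_num)]
    norm_num at hb ⊢
    linarith [hb.2.1]
  obtain ⟨a, haJ, ha⟩ := near _ hL
  obtain ⟨b, hbJ, hb⟩ := near _ hR
  have ha' : a.1 < 0 := by
    have := (le_max_left _ _).trans_lt ((Prod.dist_eq (x := ((-1, 0) : ℝ × ℝ)) (y := a)) ▸ ha)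
    rw [Real.dist_eq] at this
    have := (abs_lt.1 this).1
    simp only at this
    linarith
  have hb' : 7 / 8 < b.1 := by
    have := (le_max_left _ _).trans_lt ((Prod.dist_eq (x := ((1, 0) : ℝ × ℝ)) (y := b)) ▸ hb)
    rw [Real.dist_eq] at this
    have := (abs_lt.1 this).2
    simp only at this
    linarith
  have cross : ∀ n, ∃ p ∈ J, p.1 = 3 / 4 * rr n := by
    intro n
    have := rr_pos n
    have := rr_le_one n
    obtain ⟨p, hp, hp'⟩ := hd.1.2.isPreconnected.intermediate_value haJ hbJ
      continuous_fst.continuousOn (show 3 / 4 * rr n ∈ Set.Icc a.1 b.1 from ⟨by linarith, by linarith⟩)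
    exact ⟨p, hp, hp'⟩
  obtain ⟨W, hW, hWJ⟩ := pi01_iff.1 hc.1
  have hce := hc.2
  have hu : CompRat fun n : ℕ => (1 / 2 : ℚ) ^ n := CompRat.half_pow Computable.id
  have hx := (CompRat.const (α := ℕ) (3 / 4)).mul hu
  have hrad := (CompRat.const (α := ℕ) (1 / 8)).mul hu
  have hP : REPred fun n : ℕ => (J ∩ ballOfCode ((3 / 4 * (1 / 2 : ℚ) ^ n, (1 / 2 : ℚ) ^ n),
      1 / 8 * (1 / 2 : ℚ) ^ n)).Nonempty :=
    re_comp (p := fun c : (ℚ × ℚ) × ℚ => (J ∩ ballOfCode c).Nonempty) hce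
      ((hx.computable.pair hu.computable).pair hrad.computable)
  have hQ : REPred fun n : ℕ => ∃ c : (ℚ × ℚ) × ℚ, W c ∧
      ((c.1.1 - c.2 < 3 / 4 * (1 / 2 : ℚ) ^ n ∧ 3 / 4 * (1 / 2 : ℚ) ^ n < c.1.1 + c.2) ∧
      (c.1.2 - c.2 < (1 / 2 : ℚ) ^ n ∧ (1 / 2 : ℚ) ^ n < c.1.2 + c.2)) := by
    have q1 : CompRat fun x : ℕ × ((ℚ × ℚ) × ℚ) => x.2.1.1 :=
      CompRat.of_computable (Computable.fst.comp (Computable.fst.comp Computable.snd))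
    have q2 : CompRat fun x : ℕ × ((ℚ × ℚ) × ℚ) => x.2.1.2 :=
      CompRat.of_computable (Computable.snd.comp (Computable.fst.comp Computable.snd))
    have q3 : CompRat fun x : ℕ × ((ℚ × ℚ) × ℚ) => x.2.2 :=
      CompRat.of_computable (Computable.snd.comp Computable.snd)
    have hx' := hx.comp (Computable.fst (α := ℕ) (β := (ℚ × ℚ) × ℚ))
    have hu' := hu.comp (Computable.fst (α := ℕ) (β := (ℚ × ℚ) × ℚ))
    exact re_exists (re_and (re_comp hW (Computable.snd (α := ℕ) (β := (ℚ × ℚ) × ℚ)))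
      (cp_and (cp_and ((q1.sub q3).lt hx') (hx'.lt (q1.add q3)))
        (cp_and ((q2.sub q3).lt hu') (hu'.lt (q2.add q3)))))
  have tmem : ∀ n (c : (ℚ × ℚ) × ℚ), ((3 / 4 * rr n, rr n) : ℝ × ℝ) ∈ ballOfCode c ↔
      ((c.1.1 - c.2 < 3 / 4 * (1 / 2 : ℚ) ^ n ∧ 3 / 4 * (1 / 2 : ℚ) ^ n < c.1.1 + c.2) ∧
      (c.1.2 - c.2 < (1 / 2 : ℚ) ^ n ∧ (1 / 2 : ℚ) ^ n < c.1.2 + c.2)) := by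
    intro n c
    rw [mem_ballOfCode]
    simp only [← Rat.cast_lt (K := ℝ), rr]
    push_cast
    exact Iff.rfl
  obtain ⟨g, hg, hgPQ⟩ := re_choice hP hQ (by
    intro n
    by_cases ht : ((3 / 4 * rr n, rr n) : ℝ × ℝ) ∈ J
    · left
      refine ⟨_, ht, ?_⟩
      rw [tmem]
      have : (0 : ℚ) < (1 / 2 : ℚ) ^ n := by positivity
      exact ⟨⟨by simp only; linarith, by simp only; linarith⟩, by simp only; linarith,
        by simp only; linarith⟩
    · right
      obtain ⟨c, hc, hc'⟩ := (hWJ _).1 ht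
      exact ⟨c, hc, (tmem n c).1 hc'⟩)
  obtain ⟨e, he⟩ := Nat.Partrec.Code.exists_code.1 (Partrec.nat_iff.1 hg.partrec)
  obtain ⟨n, hn⟩ : ∃ n, Denumerable.ofNat Nat.Partrec.Code n = e :=
    ⟨Encodable.encode e, Denumerable.ofNat_encode e⟩
  have hv : ∃ s, vv n s = some (g n) := by
    have : g n ∈ Nat.Partrec.Code.eval e n := by rw [he]; simp
    obtain ⟨s, hs⟩ := Nat.Partrec.Code.evaln_complete.1 this
    exact ⟨s, by unfold vv; rw [hn]; exact hs⟩
  obtain ⟨s, hs⟩ := hv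
  have hr := rr_pos n
  rcases hgPQ n with ⟨h0, p, hpJ, hp⟩ | ⟨h1, c, hcW, hcc⟩
  · rw [h0] at hs
    have hh := fate_zero (hf n) hs
    rw [mem_ballOfCode] at hp
    push_cast at hp
    change ((3 / 4 * rr n - 1 / 8 * rr n < p.1 ∧ p.1 < 3 / 4 * rr n + 1 / 8 * rr n) ∧
      (rr n - 1 / 8 * rr n < p.2 ∧ p.2 < rr n + 1 / 8 * rr n)) at hp
    obtain ⟨⟨p1, p2⟩, p3, p4⟩ := hp
    have := dendr_tile (hJ hpJ) (n := n) (by linarith) (by linarith)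
    obtain ⟨-, -, ⟨-, h⟩ | ⟨-, -, h⟩ | ⟨-, h⟩⟩ := this <;> linarith
  · rw [h1] at hs
    obtain ⟨f1, f2⟩ := fate_succ' (j := 0) (hf n) hs
    obtain ⟨p, hpJ, hp⟩ := cross n
    have := dendr_tile (hJ hpJ) (n := n) (by linarith) (by linarith)
    have z : |p.1 - 3 / 4 * rr n| = 0 := by rw [hp]; simp
    have hp2 : p.2 = rr n := by
      obtain ⟨-, -, ⟨h, -⟩ | ⟨h, -⟩ | ⟨-, h⟩⟩ := this
      · linarith
      · linarith
      · linarith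
    have : p = (3 / 4 * rr n, rr n) := Prod.ext hp hp2
    rw [this] at hpJ
    exact (hWJ _).2 ⟨c, hcW, (tmem n c).2 hcc⟩ hpJ

end PartE

theorem exists_pi01_dendrite_not_star_including_computable_dendrite :
    ∃ H : Set (ℝ × ℝ), IsPi01Closed H ∧ IsDendrite H ∧
      ∃ ε : ℝ, 0 < ε ∧ ∀ J : Set (ℝ × ℝ), J ⊆ H → IsComputableClosed J → IsDendrite J →
        ε ≤ Metric.hausdorffDist J H := by
  choose x hx using exists_fate
  have hf : ∀ n, Fate n ((fun n => (x n).1) n) ((fun n => (x n).2) n) := hx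
  have hb := fun n => fate_bounds (hf n)
  have hD := dendr_isDendrite (fun n => (hb n).1) (fun n => (hb n).2.1) (fun n => (hb n).2.2.1)
    (fun n => (hb n).2.2.2)
  exact ⟨_, dendr_pi01 hf, hD, 1 / 8, by norm_num, fun J hJ hc hd => diag hf hJ hc hd hD⟩
end

section
/- There exists a nonempty Π⁰₁ closed subset Q of the square [0,1]² ⊆ ℝ² such that the subspace Q is contractible and locally contractible, and there is a real ε > 0 such that every nonempty connected computable closed set B ⊆ Q satisfies d_H(B, Q) ≥ ε (so Q *-includes no nonempty connected computable closed subset). -/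
open Set Metric

/-- A space is locally contractible if every neighbourhood `U` of every point contains a
neighbourhood `V` of that point such that the inclusion `V ↪ U` is null-homotopic. -/
def LocallyContractibleSpace' (X : Type*) [TopologicalSpace X] : Prop :=
  ∀ (x : X) (U : Set X), U ∈ nhds x → ∃ V ∈ nhds x, ∃ hVU : V ⊆ U,
    ∃ u : ↥U, ContinuousMap.Homotopic
      ⟨Set.inclusion hVU, continuous_inclusion hVU⟩ (ContinuousMap.const ↥V u)

namespace RatComp
open Encodable Denumerable

/-- The underlying (non-surjective) code of a rational in Mathlib. -/
def ratE (q : ℚ) : ℕ := @encode ℚ Rat.instEncodable q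

theorem ratE_eq (q : ℚ) : ratE q = Nat.pair (encode q.num) q.den := by
  cases q; rfl

theorem encode_int_ofNat (n : ℕ) : encode (Int.ofNat n) = 2 * n := rfl
theorem encode_int_negSucc (n : ℕ) : encode (Int.negSucc n) = 2 * n + 1 := rfl

theorem encode_int_surj (k : ℕ) : ∃ z : ℤ, encode z = k :=
  ⟨ofNat ℤ k, encode_ofNat k⟩

theorem natAbs_eq (z : ℤ) : z.natAbs = (encode z + 1) / 2 := by
  cases z with
  | ofNat n => rw [encode_int_ofNat]; simp; omega
  | negSucc n => rw [encode_int_negSucc]; simp; omega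

def posN (k : ℕ) : ℕ := if k % 2 = 0 then k / 2 else 0
def negN (k : ℕ) : ℕ := if k % 2 = 0 then 0 else k / 2 + 1

theorem int_eq (z : ℤ) : z = (posN (encode z) : ℤ) - negN (encode z) := by
  cases z with
  | ofNat n => rw [encode_int_ofNat]; simp [posN, negN]
  | negSucc n =>
    rw [encode_int_negSucc]
    have h : (2 * n + 1) % 2 ≠ 0 := by omega
    have h2 : (2 * n + 1) / 2 = n := by omega
    simp only [posN, negN, h, if_false, h2]
    rw [Int.negSucc_eq]; push_cast; ring

/-- membership in the range of `ratE`, in elementary terms -/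
def InS (k : ℕ) : Prop := 0 < k.unpair.2 ∧
  ∀ d < k.unpair.2 + 1, ((k.unpair.1 + 1) / 2) % d = 0 → k.unpair.2 % d = 0 → d = 1

theorem inS_iff (k : ℕ) : k ∈ Set.range ratE ↔ InS k := by
  have cop : ∀ a b : ℕ, 0 < b → (Nat.Coprime a b ↔
      ∀ d < b + 1, a % d = 0 → b % d = 0 → d = 1) := by
    intro a b hb
    constructor
    · intro h d _ h1 h2
      exact Nat.eq_one_of_dvd_coprimes h (Nat.dvd_of_mod_eq_zero h1) (Nat.dvd_of_mod_eq_zero h2)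
    · intro h
      apply h
      · exact Nat.lt_succ_of_le (Nat.le_of_dvd hb (Nat.gcd_dvd_right a b))
      · exact Nat.mod_eq_zero_of_dvd (Nat.gcd_dvd_left a b)
      · exact Nat.mod_eq_zero_of_dvd (Nat.gcd_dvd_right a b)
  constructor
  · rintro ⟨q, rfl⟩
    rw [ratE_eq]
    unfold InS
    rw [Nat.unpair_pair]
    refine ⟨q.den_pos, ?_⟩
    rw [← natAbs_eq]
    exact (cop _ _ q.den_pos).1 q.reduced
  · rintro ⟨h1, h2⟩
    obtain ⟨z, hz⟩ := encode_int_surj k.unpair.1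
    rw [← hz, ← natAbs_eq] at h2
    refine ⟨⟨z, k.unpair.2, h1.ne', (cop _ _ h1).2 h2⟩, ?_⟩
    rw [ratE_eq]
    simp only [hz, Nat.pair_unpair]

theorem inS_primrec : PrimrecPred InS := by
  have h2 : Primrec fun k : ℕ => k.unpair.2 := Primrec.snd.comp Primrec.unpair
  have h1 : Primrec fun k : ℕ => (k.unpair.1 + 1) / 2 :=
    Primrec.nat_div.comp (Primrec.succ.comp (Primrec.fst.comp Primrec.unpair)) (Primrec.const 2)
  have hR : PrimrecRel fun (d k : ℕ) =>
      ((k.unpair.1 + 1) / 2) % d = 0 → k.unpair.2 % d = 0 → d = 1 := by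
    have a1 : PrimrecRel fun (d k : ℕ) => ((k.unpair.1 + 1) / 2) % d = 0 :=
      Primrec.eq.comp (Primrec.nat_mod.comp (h1.comp Primrec.snd) Primrec.fst) (Primrec.const 0)
    have a2 : PrimrecRel fun (d k : ℕ) => k.unpair.2 % d = 0 :=
      Primrec.eq.comp (Primrec.nat_mod.comp (h2.comp Primrec.snd) Primrec.fst) (Primrec.const 0)
    have a3 : PrimrecRel fun (d _k : ℕ) => d = 1 :=
      Primrec.eq.comp Primrec.fst (Primrec.const 1)
    unfold PrimrecRel at a1 a2 a3 ⊢
    refine PrimrecPred.of_eq ((PrimrecPred.not a1).or ((PrimrecPred.not a2).or a3)) ?_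
    rintro ⟨a, b⟩
    dsimp only
    tauto
  have hA := hR.forall_lt
  refine PrimrecPred.and ?_ ?_
  · exact Primrec.nat_lt.comp (Primrec.const 0) h2
  · exact hA.comp (Primrec.succ.comp h2) Primrec.id

theorem ratE_succ (n : ℕ) : ∃ m, ratE (ofNat ℚ (n + 1)) = ratE (ofNat ℚ n) + m + 1 ∧
    InS (ratE (ofNat ℚ n) + m + 1) ∧ ∀ m' < m, ¬ InS (ratE (ofNat ℚ n) + m' + 1) := by
  let _ := @decidableRangeEncode ℚ Rat.instEncodable
  have _ : Infinite (Set.range (@encode ℚ Rat.instEncodable)) :=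
    Infinite.of_injective _ (Equiv.ofInjective _ encode_injective).injective
  have key : ∀ n, ratE (ofNat ℚ n) =
      (Nat.Subtype.ofNat (Set.range (@encode ℚ Rat.instEncodable)) n : ℕ) := by
    intro n
    exact congrArg Subtype.val ((@equivRangeEncode ℚ Rat.instEncodable).apply_symm_apply
      (Nat.Subtype.ofNat (Set.range (@encode ℚ Rat.instEncodable)) n))
  have hx := Nat.Subtype.exists_succ
    (Nat.Subtype.ofNat (Set.range (@encode ℚ Rat.instEncodable)) n)
  refine ⟨Nat.find hx, ?_, ?_, ?_⟩
  · rw [key, key]; rfl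
  · rw [key n, ← inS_iff]; exact Nat.find_spec hx
  · intro m' hm'
    rw [key n, ← inS_iff]; exact Nat.find_min hx hm'

theorem computable_ratE : Computable ratE := by
  obtain ⟨D, hD⟩ := inS_primrec
  have hD' : Computable fun k => decide (InS k) := hD.to_comp
  have step : Partrec₂ fun (_ : ℕ) (p : ℕ × ℕ) =>
      (Nat.rfind fun m => Part.some (decide (InS (p.2 + m + 1)))).map fun m => p.2 + m + 1 := by
    refine Partrec.map (Partrec.rfind (p := fun (a : ℕ × ℕ × ℕ) m =>
      Part.some (decide (InS (a.2.2 + m + 1)))) ?_) ?_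
    · refine Computable₂.partrec₂ (f := fun (a : ℕ × ℕ × ℕ) m => decide (InS (a.2.2 + m + 1))) ?_
      exact hD'.comp (Primrec.succ.to_comp.comp (Primrec.nat_add.to_comp.comp
        (Computable.snd.comp (Computable.snd.comp Computable.fst)) Computable.snd))
    · exact (Primrec.succ.to_comp.comp (Primrec.nat_add.to_comp.comp
        (Computable.snd.comp (Computable.snd.comp Computable.fst)) Computable.snd))
  have hrec := Partrec.nat_rec (f := fun n : ℕ => n) (g := fun _ => Part.some (ratE (ofNat ℚ 0)))
    Computable.id (Computable.const (ratE (ofNat ℚ 0))).partrec step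
  have hE : Computable fun n : ℕ => ratE (ofNat ℚ n) := by
    refine Partrec.of_eq hrec ?_
    intro n
    induction n with
    | zero => rfl
    | succ n ih =>
      simp only at ih ⊢
      rw [ih]
      obtain ⟨m, h1, h2, h3⟩ := ratE_succ n
      simp only [PFun.coe_val, Part.bind_some]
      rw [h1]
      have : (Nat.rfind fun m => Part.some (decide (InS (ratE (ofNat ℚ n) + m + 1)))) =
          Part.some m := by
        rw [Part.eq_some_iff]
        refine Nat.mem_rfind.2 ⟨by simpa using h2, fun {k} hk => by simpa using h3 k hk⟩
      rw [this, Part.map_some]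
  have := hE.comp (Computable.encode (α := ℚ))
  refine this.of_eq ?_
  intro q
  exact congrArg ratE (ofNat_encode q)

/-- positive part of the numerator -/
def rp (q : ℚ) : ℕ := posN (ratE q).unpair.1
/-- negative part of the numerator -/
def rm (q : ℚ) : ℕ := negN (ratE q).unpair.1

theorem rat_eq (q : ℚ) : q = ((rp q : ℚ) - rm q) / q.den := by
  have h := int_eq q.num
  have h2 : (ratE q).unpair.1 = encode q.num := by rw [ratE_eq, Nat.unpair_pair]
  rw [rp, rm, h2]
  conv_lhs => rw [← Rat.num_div_den q, h]
  push_cast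
  rfl

theorem computable_den : Computable fun q : ℚ => q.den := by
  have : Computable fun q : ℚ => (ratE q).unpair.2 :=
    (Primrec.snd.comp Primrec.unpair).to_comp.comp computable_ratE
  refine this.of_eq fun q => ?_
  rw [ratE_eq, Nat.unpair_pair]

theorem primrec_even : PrimrecPred fun k : ℕ => k % 2 = 0 :=
  Primrec.eq.comp (Primrec.nat_mod.comp Primrec.id (Primrec.const 2)) (Primrec.const 0)

theorem computable_rp : Computable rp := by
  have : Primrec posN := Primrec.ite primrec_even
    (Primrec.nat_div.comp Primrec.id (Primrec.const 2)) (Primrec.const 0)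
  exact this.to_comp.comp ((Primrec.fst.comp Primrec.unpair).to_comp.comp computable_ratE)

theorem computable_rm : Computable rm := by
  have : Primrec negN := Primrec.ite primrec_even (Primrec.const 0)
    (Primrec.succ.comp (Primrec.nat_div.comp Primrec.id (Primrec.const 2)))
  exact this.to_comp.comp ((Primrec.fst.comp Primrec.unpair).to_comp.comp computable_ratE)

section
variable {α : Type*} [Primcodable α]

theorem cadd {f g : α → ℕ} (hf : Computable f) (hg : Computable g) :
    Computable fun a => f a + g a := Primrec.nat_add.to_comp.comp hf hg
theorem cmul {f g : α → ℕ} (hf : Computable f) (hg : Computable g) :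
    Computable fun a => f a * g a := Primrec.nat_mul.to_comp.comp hf hg

theorem search {β : Type*} [Denumerable β] {g : α → β} (t : α → β → Bool) (ht : Computable₂ t)
    (h : ∀ a q, t a q = true ↔ q = g a) : Computable g := by
  have hb : Computable₂ fun (a : α) (n : ℕ) => t a (ofNat β n) :=
    ht.comp Computable.fst ((Computable.ofNat β).comp Computable.snd)
  have h' := (Partrec.rfind hb.partrec₂).map ((Computable.ofNat β).comp Computable.snd).to₂
  refine Partrec.of_eq h' fun a => ?_
  rw [PFun.coe_val, Part.eq_some_iff, Part.mem_map_iff]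
  refine ⟨encode (g a), ?_, ofNat_encode _⟩
  refine Nat.mem_rfind.2 ⟨?_, ?_⟩
  · have := (h a (g a)).2 rfl
    change true ∈ Part.some (t a (ofNat β (encode (g a))))
    rw [ofNat_encode, this]
    exact Part.mem_some _
  · intro k hk
    have : ¬ (ofNat β k = g a) := by
      intro h
      rw [← h, encode_ofNat] at hk
      exact lt_irrefl _ hk
    rw [← h, Bool.not_eq_true] at this
    change false ∈ Part.some (t a (ofNat β k))
    rw [this]
    exact Part.mem_some _

theorem cmk {p m d : α → ℕ} (hp : Computable p) (hm : Computable m) (hd : Computable d)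
    (hpos : ∀ a, 0 < d a) : Computable fun a => ((p a : ℚ) - m a) / d a := by
  refine search (fun a q => decide (p a * q.den + rm q * d a = rp q * d a + m a * q.den)) ?_ ?_
  · have e := (Primrec.eq (α := ℕ)).decide.to_comp
    have hd' := computable_den.comp (Computable.snd (α := α))
    have hm' := computable_rm.comp (Computable.snd (α := α))
    have hp' := computable_rp.comp (Computable.snd (α := α))
    exact e.comp (cadd (cmul (hp.comp Computable.fst) hd') (cmul hm' (hd.comp Computable.fst)))
      (cadd (cmul hp' (hd.comp Computable.fst)) (cmul (hm.comp Computable.fst) hd'))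
  · intro a q
    rw [decide_eq_true_iff]
    have hq := rat_eq q
    have h1 : (q.den : ℚ) ≠ 0 := by exact_mod_cast q.den_ne_zero
    have h2 : (d a : ℚ) ≠ 0 := by exact_mod_cast (hpos a).ne'
    rw [eq_div_iff h2, ← Nat.cast_inj (R := ℚ)]
    have h3 : q * q.den = rp q - rm q := (eq_div_iff h1).1 hq
    push_cast
    constructor
    · intro h
      apply mul_right_cancel₀ h1
      linear_combination (d a : ℚ) * h3 - h
    · intro h
      linear_combination (d a : ℚ) * h3 - (q.den : ℚ) * h

theorem qadd {f g : α → ℚ} (hf : Computable f) (hg : Computable g) :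
    Computable fun a => f a + g a := by
  have hfp := computable_rp.comp hf
  have hfm := computable_rm.comp hf
  have hfd := computable_den.comp hf
  have hgp := computable_rp.comp hg
  have hgm := computable_rm.comp hg
  have hgd := computable_den.comp hg
  refine (cmk (cadd (cmul hfp hgd) (cmul hgp hfd)) (cadd (cmul hfm hgd) (cmul hgm hfd))
    (cmul hfd hgd) (fun a => Nat.mul_pos (f a).den_pos (g a).den_pos)).of_eq fun a => ?_
  have h1 : ((f a).den : ℚ) ≠ 0 := by exact_mod_cast (f a).den_ne_zero
  have h2 : ((g a).den : ℚ) ≠ 0 := by exact_mod_cast (g a).den_ne_zero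
  conv_rhs => rw [rat_eq (f a), rat_eq (g a)]
  push_cast
  field_simp
  ring

theorem qmul {f g : α → ℚ} (hf : Computable f) (hg : Computable g) :
    Computable fun a => f a * g a := by
  have hfp := computable_rp.comp hf
  have hfm := computable_rm.comp hf
  have hfd := computable_den.comp hf
  have hgp := computable_rp.comp hg
  have hgm := computable_rm.comp hg
  have hgd := computable_den.comp hg
  refine (cmk (cadd (cmul hfp hgp) (cmul hfm hgm)) (cadd (cmul hfp hgm) (cmul hfm hgp))
    (cmul hfd hgd) (fun a => Nat.mul_pos (f a).den_pos (g a).den_pos)).of_eq fun a => ?_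
  have h1 : ((f a).den : ℚ) ≠ 0 := by exact_mod_cast (f a).den_ne_zero
  have h2 : ((g a).den : ℚ) ≠ 0 := by exact_mod_cast (g a).den_ne_zero
  conv_rhs => rw [rat_eq (f a), rat_eq (g a)]
  push_cast
  field_simp
  ring

theorem qsub {f g : α → ℚ} (hf : Computable f) (hg : Computable g) :
    Computable fun a => f a - g a :=
  (qadd hf (qmul (Computable.const (-1)) hg)).of_eq fun a => by ring

theorem qle {f g : α → ℚ} (hf : Computable f) (hg : Computable g) :
    Computable fun a => decide (f a ≤ g a) := by
  have hfp := computable_rp.comp hf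
  have hfm := computable_rm.comp hf
  have hfd := computable_den.comp hf
  have hgp := computable_rp.comp hg
  have hgm := computable_rm.comp hg
  have hgd := computable_den.comp hg
  have e := Primrec.nat_le.decide.to_comp
  refine (e.comp (cadd (cmul hfp hgd) (cmul hgm hfd)) (cadd (cmul hgp hfd)
    (cmul hfm hgd))).of_eq fun a => ?_
  rw [decide_eq_decide]
  have h1 : (0:ℚ) < ((f a).den : ℚ) := by exact_mod_cast (f a).den_pos
  have h2 : (0:ℚ) < ((g a).den : ℚ) := by exact_mod_cast (g a).den_pos
  conv_rhs => rw [rat_eq (f a), rat_eq (g a)]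
  rw [div_le_div_iff₀ h1 h2, ← Nat.cast_le (α := ℚ)]
  push_cast
  constructor <;> intro h <;> linarith

theorem cand {f g : α → Bool} (hf : Computable f) (hg : Computable g) :
    Computable fun a => f a && g a := Primrec.and.to_comp.comp hf hg
theorem cor {f g : α → Bool} (hf : Computable f) (hg : Computable g) :
    Computable fun a => f a || g a := Primrec.or.to_comp.comp hf hg

end

/-- `4^{-(n+1)}` -/
def dq (n : ℕ) : ℚ := 1 / 4 ^ (n + 1)

theorem computable_dq : Computable dq := by
  have hp : Primrec fun n : ℕ => 4 ^ (n + 1) := by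
    have : Primrec fun n : ℕ => Nat.rec (motive := fun _ => ℕ) 4 (fun _ x => 4 * x) n :=
      Primrec.nat_rec₁ 4 (Primrec.nat_mul.comp (Primrec.const 4) Primrec.snd)
    refine this.of_eq fun n => ?_
    induction n with
    | zero => rfl
    | succ n ih => simp only at ih ⊢; rw [ih]; ring
  refine (cmk (Computable.const 1) (Computable.const 0) hp.to_comp
    (fun a => by positivity)).of_eq fun n => ?_
  simp [dq]

end RatComp

namespace RetractTop

variable {E : Type*} [NormedAddCommGroup E] [NormedSpace ℝ E]

theorem contractible_of_retract (Q : Set E) (r : E → E) (hr : Continuous r)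
    (hQ : ∀ x, r x ∈ Q) (hid : ∀ x ∈ Q, r x = x) : ContractibleSpace Q := by
  let R : C(E, Q) := ⟨fun x => ⟨r x, hQ x⟩, by fun_prop⟩
  let J : C(Q, E) := ⟨Subtype.val, continuous_subtype_val⟩
  rw [contractible_iff_id_nullhomotopic]
  have h : (R.comp J) = ContinuousMap.id Q := by
    ext x
    exact hid x.1 x.2
  rw [← h]
  have h1 : J.Nullhomotopic := by
    have := (id_nullhomotopic E).comp_left J
    simpa using this
  exact h1.comp_right R

theorem locallyContractible_of_retract (Q : Set E) (r : E → E) (hr : Continuous r)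
    (hQ : ∀ x, r x ∈ Q) (hid : ∀ x ∈ Q, r x = x) : LocallyContractibleSpace' Q := by
  intro x U hU
  let R : E → Q := fun x => ⟨r x, hQ x⟩
  have hR : Continuous R := by fun_prop
  have hRx : R x = x := Subtype.ext (hid x.1 x.2)
  have hRQ : ∀ y : Q, R y = y := fun y => Subtype.ext (hid y.1 y.2)
  have hpre : R ⁻¹' U ∈ nhds (x : E) := hR.continuousAt.preimage_mem_nhds (by rwa [hRx])
  obtain ⟨δ, hδ, hball⟩ := Metric.mem_nhds_iff.1 hpre
  let V : Set Q := Subtype.val ⁻¹' Metric.ball (x : E) δ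
  have hV : V ∈ nhds x := continuous_subtype_val.continuousAt.preimage_mem_nhds
    (Metric.ball_mem_nhds _ hδ)
  have hVU : V ⊆ U := by
    intro v hv
    have := hball hv
    rw [Set.mem_preimage, hRQ] at this
    exact this
  refine ⟨V, hV, hVU, ⟨x, mem_of_mem_nhds hU⟩, ⟨?_⟩⟩
  have hseg : ∀ (t : unitInterval) (v : V),
      (1 - (t : ℝ)) • ((v : Q) : E) + (t : ℝ) • (x : E) ∈ Metric.ball (x : E) δ := by
    intro t v
    exact convex_ball (x : E) δ v.2 (Metric.mem_ball_self hδ) (by linarith [t.2.2]) t.2.1 (by ring)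
  exact
    { toFun := fun p => ⟨R ((1 - (p.1 : ℝ)) • ((p.2 : Q) : E) + (p.1 : ℝ) • (x : E)),
        hball (hseg p.1 p.2)⟩
      continuous_toFun := by fun_prop
      map_zero_left := by
        intro v
        apply Subtype.ext
        simp [hRQ, Set.inclusion]
      map_one_left := by
        intro v
        apply Subtype.ext
        simp [hRQ] }

end RetractTop

namespace MainConstr
open Encodable Denumerable Nat.Partrec RatComp

/-- First member of a computably inseparable pair. -/
def AA (n : ℕ) : Prop := 0 ∈ Code.eval (ofNat Code n) n
/-- Second member of a computably inseparable pair. -/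
def BB (n : ℕ) : Prop := 1 ∈ Code.eval (ofNat Code n) n

theorem disj (n : ℕ) (ha : AA n) (hb : BB n) : False := by
  have := Part.mem_unique ha hb
  omega

theorem insep (P R : ℕ → Prop) (hP : REPred P) (hR : REPred R) (h : ∀ n, P n ∨ R n)
    (hA : ∀ n, AA n → ¬ R n) (hB : ∀ n, BB n → ¬ P n) : False := by
  have h1 : Partrec fun n => (Part.assert (P n) fun _ => Part.some ()).map fun _ => 1 :=
    Partrec.map hP (Computable.const 1).to₂
  have h0 : Partrec fun n => (Part.assert (R n) fun _ => Part.some ()).map fun _ => 0 :=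
    Partrec.map hR (Computable.const 0).to₂
  obtain ⟨k, hk, hk'⟩ := Partrec.merge' h1 h0
  obtain ⟨c, hc⟩ := Code.exists_code.1 (Partrec.nat_iff.1 hk)
  obtain ⟨hv, hd⟩ := hk' (encode c)
  have hdom : (k (encode c)).Dom := by
    rw [hd]
    rcases h (encode c) with h | h
    · left; exact ⟨h, trivial⟩
    · right; exact ⟨h, trivial⟩
  obtain ⟨v, hv1⟩ := Part.dom_iff_mem.1 hdom
  rcases hv v hv1 with h | h
  · rw [Part.mem_map_iff] at h
    obtain ⟨_, h2, rfl⟩ := h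
    obtain ⟨h3, _⟩ := Part.mem_assert_iff.1 h2
    refine hB (encode c) ?_ h3
    rw [BB, ofNat_encode, hc]; exact hv1
  · rw [Part.mem_map_iff] at h
    obtain ⟨_, h2, rfl⟩ := h
    obtain ⟨h3, _⟩ := Part.mem_assert_iff.1 h2
    refine hA (encode c) ?_ h3
    rw [AA, ofNat_encode, hc]; exact hv1

theorem re_exists {α : Type*} [Primcodable α] {t : α → ℕ → Bool} (ht : Computable₂ t) :
    REPred fun a => ∃ n, t a n = true := by
  refine (Partrec.rfind ht.partrec₂).dom_re.of_eq fun a => ?_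
  constructor
  · intro h
    obtain ⟨n, hn⟩ := Part.dom_iff_mem.1 h
    refine ⟨n, ?_⟩
    have := Nat.rfind_spec hn
    exact (Part.mem_some_iff.1 this).symm
  · rintro ⟨n, hn⟩
    obtain ⟨m, hm, _⟩ := Nat.rfind_min' (p := t a) hn
    exact Part.dom_iff_mem.2 ⟨m, hm⟩

/-- `c_n - 1/2` as a real number -/
noncomputable def d (n : ℕ) : ℝ := (dq n : ℝ)

theorem d_pos (n : ℕ) : 0 < d n := by
  have : (0:ℚ) < dq n := by unfold dq; positivity
  unfold d; exact_mod_cast this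

theorem d_lt {m n : ℕ} (h : m < n) : d n ≤ d m / 4 := by
  unfold d dq
  push_cast
  have h1 : (4:ℝ) ^ (m + 1) * 4 ≤ 4 ^ (n + 1) := by
    rw [← pow_succ]
    exact pow_le_pow_right₀ (by norm_num) (by omega)
  rw [div_div]
  exact one_div_le_one_div_of_le (by positivity) h1

theorem d_le (n : ℕ) : d n ≤ 1 / 4 := by
  unfold d dq
  push_cast
  have h1 : (4:ℝ) ≤ 4 ^ (n + 1) := by
    rw [pow_succ]
    have := one_le_pow₀ (n := n) (show (1:ℝ) ≤ 4 by norm_num)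
    linarith
  exact one_div_le_one_div_of_le (by positivity) h1

/-- The set. -/
def Q : Set (ℝ × ℝ) := {p | 0 ≤ p.1 ∧ p.1 ≤ 1 ∧ 0 ≤ p.2 ∧ p.2 ≤ |p.1 - 1 / 2| ∧
  (∀ n, AA n → p.2 ≤ |p.1 - (1 / 2 + d n)|) ∧
  (∀ n, BB n → 3 / 4 * d n ≤ p.2 + |p.1 - (1 / 2 + d n)|)}

/-! ### The retraction -/

/-- the lower boundary -/
noncomputable def lo (x : ℝ) : ℝ :=
  sSup (insert 0 {y | ∃ n, BB n ∧ y = 3 / 4 * d n - |x - (1 / 2 + d n)|})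

theorem lo_bdd (x : ℝ) :
    BddAbove (insert 0 {y | ∃ n, BB n ∧ y = 3 / 4 * d n - |x - (1 / 2 + d n)|}) := by
  refine ⟨1, ?_⟩
  rintro y (rfl | ⟨n, _, rfl⟩)
  · norm_num
  · have := d_le n
    have := abs_nonneg (x - (1 / 2 + d n))
    linarith

theorem lo_le_iff (x y : ℝ) : lo x ≤ y ↔ 0 ≤ y ∧
    ∀ n, BB n → 3 / 4 * d n ≤ y + |x - (1 / 2 + d n)| := by
  unfold lo
  rw [csSup_le_iff (lo_bdd x) ⟨0, Set.mem_insert _ _⟩]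
  constructor
  · intro h
    refine ⟨h 0 (Set.mem_insert _ _), fun n hn => ?_⟩
    have := h _ (Set.mem_insert_of_mem _ ⟨n, hn, rfl⟩)
    linarith
  · rintro ⟨h0, h⟩ b (rfl | ⟨n, hn, rfl⟩)
    · exact h0
    · linarith [h n hn]

theorem lo_cont : Continuous lo := by
  refine LipschitzWith.continuous (K := 1) (LipschitzWith.of_le_add fun x y => ?_)
  obtain ⟨h0, h1⟩ := (lo_le_iff y (lo y)).1 le_rfl
  rw [lo_le_iff]
  refine ⟨add_nonneg h0 dist_nonneg, fun n hn => ?_⟩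
  have h2 := h1 n hn
  have h3 := abs_sub_le y x (1 / 2 + d n)
  rw [Real.dist_eq, abs_sub_comm x y]
  linarith

/-- apexes of the removed upper cones -/
def Z : Set ℝ := insert (1 / 2) {z | ∃ n, AA n ∧ z = 1 / 2 + d n}

/-- the upper boundary -/
noncomputable def hi (x : ℝ) : ℝ := Metric.infDist x Z

theorem le_hi_iff (x y : ℝ) : y ≤ hi x ↔ y ≤ |x - 1 / 2| ∧
    ∀ n, AA n → y ≤ |x - (1 / 2 + d n)| := by
  unfold hi
  have hZ : Z.Nonempty := ⟨1 / 2, Set.mem_insert _ _⟩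
  rw [Metric.le_infDist hZ]
  constructor
  · intro h
    exact ⟨h (Set.mem_insert _ _), fun n hn => h (Set.mem_insert_of_mem _ ⟨n, hn, rfl⟩)⟩
  · rintro ⟨h0, h⟩ b (rfl | ⟨n, hn, rfl⟩)
    · exact h0
    · exact h n hn

theorem lo_le_hi (x : ℝ) : lo x ≤ hi x := by
  rw [lo_le_iff]
  refine ⟨Metric.infDist_nonneg, fun m hm => ?_⟩
  have : 3 / 4 * d m - |x - (1 / 2 + d m)| ≤ hi x := by
    have hm0 := d_pos m
    rw [le_hi_iff]
    constructor
    · have h := abs_sub_le (1 / 2 + d m) x (1 / 2)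
      rw [abs_sub_comm (1 / 2 + d m) x, add_sub_cancel_left, abs_of_pos hm0] at h
      linarith
    · intro n hn
      have hn0 := d_pos n
      have h := abs_sub_le (1 / 2 + d m) x (1 / 2 + d n)
      rw [abs_sub_comm (1 / 2 + d m) x] at h
      have h4 : 3 / 4 * d m ≤ |1 / 2 + d m - (1 / 2 + d n)| := by
        rcases lt_trichotomy m n with hmn | rfl | hmn
        · have := d_lt hmn
          have := le_abs_self (1 / 2 + d m - (1 / 2 + d n))
          linarith
        · exact (disj m hn hm).elim
        · have := d_lt hmn
          have := neg_abs_le (1 / 2 + d m - (1 / 2 + d n))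
          linarith
      linarith
  linarith

theorem mem_Q_iff (p : ℝ × ℝ) : p ∈ Q ↔ 0 ≤ p.1 ∧ p.1 ≤ 1 ∧ lo p.1 ≤ p.2 ∧ p.2 ≤ hi p.1 := by
  rw [lo_le_iff, le_hi_iff]
  unfold Q
  simp only [Set.mem_setOf_eq]
  tauto

/-- the retraction of the plane onto `Q` -/
noncomputable def ret (p : ℝ × ℝ) : ℝ × ℝ :=
  (max 0 (min 1 p.1), max (lo (max 0 (min 1 p.1))) (min (hi (max 0 (min 1 p.1))) p.2))

theorem ret_cont : Continuous ret := by
  have h1 := lo_cont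
  have h2 : Continuous hi := Metric.continuous_infDist_pt Z
  unfold ret
  fun_prop

theorem ret_mem (p : ℝ × ℝ) : ret p ∈ Q := by
  rw [mem_Q_iff]
  exact ⟨le_max_left _ _, max_le zero_le_one (min_le_left _ _), le_max_left _ _,
    max_le (lo_le_hi _) (min_le_left _ _)⟩

theorem ret_id (p : ℝ × ℝ) (hp : p ∈ Q) : ret p = p := by
  rw [mem_Q_iff] at hp
  obtain ⟨h1, h2, h3, h4⟩ := hp
  have h5 : max 0 (min 1 p.1) = p.1 := by rw [min_eq_right h2, max_eq_right h1]
  unfold ret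
  rw [h5, min_eq_right h4, max_eq_right h3]

/-! ### Effectivity -/

theorem mem_ball_iff (p : ℝ × ℝ) (c : (ℚ × ℚ) × ℚ) :
    p ∈ ballOfCode c ↔ |p.1 - c.1.1| < c.2 ∧ |p.2 - c.1.2| < c.2 := by
  unfold ballOfCode
  rw [Set.mem_setOf_eq, Prod.dist_eq, max_lt_iff, Real.dist_eq, Real.dist_eq]

theorem exists_code (p : ℝ × ℝ) (δ : ℝ) (hδ : 0 < δ) : ∃ c : (ℚ × ℚ) × ℚ,
    p ∈ ballOfCode c ∧ (c.2 : ℝ) < δ := by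
  obtain ⟨r, hr0, hr⟩ := exists_rat_btwn hδ
  obtain ⟨q1, h1, h1'⟩ := exists_rat_btwn (show p.1 - r < p.1 by linarith)
  obtain ⟨q2, h2, h2'⟩ := exists_rat_btwn (show p.2 - r < p.2 by linarith)
  refine ⟨((q1, q2), r), ?_, hr⟩
  rw [mem_ball_iff]
  simp only [abs_lt]
  refine ⟨⟨?_, ?_⟩, ⟨?_, ?_⟩⟩ <;> linarith

/-- the ball lies in the open upper cone with apex `(z, 0)` -/
def upTest (z : ℚ) (c : (ℚ × ℚ) × ℚ) : Bool :=
  decide (c.1.1 - z + c.2 ≤ c.1.2 - c.2) && decide (z - c.1.1 + c.2 ≤ c.1.2 - c.2)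

/-- the ball lies in the open lower cone with apex `(z, h)` -/
def dnTest (z h : ℚ) (c : (ℚ × ℚ) × ℚ) : Bool :=
  decide (c.1.1 - z + c.2 ≤ h - (c.1.2 + c.2)) && decide (z - c.1.1 + c.2 ≤ h - (c.1.2 + c.2))

/-- the ball is outside of the strip -/
def outTest (c : (ℚ × ℚ) × ℚ) : Bool :=
  decide (c.1.1 + c.2 ≤ 0) || (decide (1 ≤ c.1.1 - c.2) || decide (c.1.2 + c.2 ≤ 0))

theorem upTest_sound {z : ℚ} {c : (ℚ × ℚ) × ℚ} (h : upTest z c = true) {p : ℝ × ℝ}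
    (hp : p ∈ ballOfCode c) : |p.1 - z| < p.2 := by
  rw [mem_ball_iff, abs_lt, abs_lt] at hp
  simp only [upTest, Bool.and_eq_true, decide_eq_true_eq] at h
  have h1 : ((c.1.1 : ℝ) - z + c.2 ≤ c.1.2 - c.2) := by exact_mod_cast h.1
  have h2 : ((z : ℝ) - c.1.1 + c.2 ≤ c.1.2 - c.2) := by exact_mod_cast h.2
  obtain ⟨⟨_, _⟩, _, _⟩ := hp
  rw [abs_lt]
  constructor <;> linarith

theorem upTest_complete {z : ℚ} {p : ℝ × ℝ} (h : |p.1 - z| < p.2) :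
    ∃ c, p ∈ ballOfCode c ∧ upTest z c = true := by
  obtain ⟨c, hc, hr⟩ := exists_code p ((p.2 - |p.1 - z|) / 8) (by linarith)
  refine ⟨c, hc, ?_⟩
  rw [mem_ball_iff, abs_lt, abs_lt] at hc
  obtain ⟨⟨_, _⟩, _, _⟩ := hc
  have ha := le_abs_self (p.1 - z)
  have hb := neg_abs_le (p.1 - z)
  simp only [upTest, Bool.and_eq_true, decide_eq_true_eq]
  constructor
  · have : ((c.1.1 : ℝ) - z + c.2 ≤ c.1.2 - c.2) := by linarith
    exact_mod_cast this
  · have : ((z : ℝ) - c.1.1 + c.2 ≤ c.1.2 - c.2) := by linarith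
    exact_mod_cast this

theorem dnTest_sound {z h' : ℚ} {c : (ℚ × ℚ) × ℚ} (h : dnTest z h' c = true) {p : ℝ × ℝ}
    (hp : p ∈ ballOfCode c) : p.2 + |p.1 - z| < h' := by
  rw [mem_ball_iff, abs_lt, abs_lt] at hp
  simp only [dnTest, Bool.and_eq_true, decide_eq_true_eq] at h
  have h1 : ((c.1.1 : ℝ) - z + c.2 ≤ h' - (c.1.2 + c.2)) := by exact_mod_cast h.1
  have h2 : ((z : ℝ) - c.1.1 + c.2 ≤ h' - (c.1.2 + c.2)) := by exact_mod_cast h.2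
  obtain ⟨⟨_, _⟩, _, _⟩ := hp
  rw [← lt_sub_iff_add_lt', abs_lt]
  constructor <;> linarith

theorem dnTest_complete {z h' : ℚ} {p : ℝ × ℝ} (h : p.2 + |p.1 - z| < h') :
    ∃ c, p ∈ ballOfCode c ∧ dnTest z h' c = true := by
  obtain ⟨c, hc, hr⟩ := exists_code p ((h' - (p.2 + |p.1 - z|)) / 8) (by linarith)
  refine ⟨c, hc, ?_⟩
  rw [mem_ball_iff, abs_lt, abs_lt] at hc
  obtain ⟨⟨_, _⟩, _, _⟩ := hc
  have ha := le_abs_self (p.1 - z)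
  have hb := neg_abs_le (p.1 - z)
  simp only [dnTest, Bool.and_eq_true, decide_eq_true_eq]
  constructor
  · have : ((c.1.1 : ℝ) - z + c.2 ≤ h' - (c.1.2 + c.2)) := by linarith
    exact_mod_cast this
  · have : ((z : ℝ) - c.1.1 + c.2 ≤ h' - (c.1.2 + c.2)) := by linarith
    exact_mod_cast this

theorem outTest_sound {c : (ℚ × ℚ) × ℚ} (h : outTest c = true) {p : ℝ × ℝ}
    (hp : p ∈ ballOfCode c) : p.1 < 0 ∨ 1 < p.1 ∨ p.2 < 0 := by
  rw [mem_ball_iff, abs_lt, abs_lt] at hp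
  obtain ⟨⟨_, _⟩, _, _⟩ := hp
  simp only [outTest, Bool.or_eq_true, decide_eq_true_eq] at h
  rcases h with h | h | h
  · have : ((c.1.1 : ℝ) + c.2 ≤ 0) := by exact_mod_cast h
    left; linarith
  · have : ((1:ℝ) ≤ c.1.1 - c.2) := by exact_mod_cast h
    right; left; linarith
  · have : ((c.1.2 : ℝ) + c.2 ≤ 0) := by exact_mod_cast h
    right; right; linarith

theorem outTest_complete {p : ℝ × ℝ} (h : p.1 < 0 ∨ 1 < p.1 ∨ p.2 < 0) :
    ∃ c, p ∈ ballOfCode c ∧ outTest c = true := by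
  simp only [outTest, Bool.or_eq_true, decide_eq_true_eq]
  rcases h with h | h | h
  · obtain ⟨c, hc, hr⟩ := exists_code p (-p.1 / 8) (by linarith)
    refine ⟨c, hc, Or.inl ?_⟩
    rw [mem_ball_iff, abs_lt, abs_lt] at hc
    obtain ⟨⟨_, _⟩, _, _⟩ := hc
    have : ((c.1.1 : ℝ) + c.2 ≤ 0) := by linarith
    exact_mod_cast this
  · obtain ⟨c, hc, hr⟩ := exists_code p ((p.1 - 1) / 8) (by linarith)
    refine ⟨c, hc, Or.inr (Or.inl ?_)⟩
    rw [mem_ball_iff, abs_lt, abs_lt] at hc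
    obtain ⟨⟨_, _⟩, _, _⟩ := hc
    have : ((1:ℝ) ≤ c.1.1 - c.2) := by linarith
    exact_mod_cast this
  · obtain ⟨c, hc, hr⟩ := exists_code p (-p.2 / 8) (by linarith)
    refine ⟨c, hc, Or.inr (Or.inr ?_)⟩
    rw [mem_ball_iff, abs_lt, abs_lt] at hc
    obtain ⟨⟨_, _⟩, _, _⟩ := hc
    have : ((c.1.2 : ℝ) + c.2 ≤ 0) := by linarith
    exact_mod_cast this

/-- stage `s` test that the `n`th program halts on `n` with output `v` -/
def haltTest (v m : ℕ) : Bool :=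
  decide (Code.evaln m.unpair.2 (ofNat Code m.unpair.1) m.unpair.1 = some v)

theorem haltTest_iff (v n : ℕ) : v ∈ Code.eval (ofNat Code n) n ↔
    ∃ s, haltTest v (Nat.pair n s) = true := by
  rw [Code.evaln_complete]
  simp [haltTest]

theorem haltTest_comp (v : ℕ) : Computable (haltTest v) := by
  have hu : Primrec fun m : ℕ => m.unpair.1 := Primrec.fst.comp Primrec.unpair
  have hs : Primrec fun m : ℕ => m.unpair.2 := Primrec.snd.comp Primrec.unpair
  have := Code.primrec_evaln.comp ((hs.pair ((Primrec.ofNat Code).comp hu)).pair hu)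
  exact ((Primrec.eq (α := Option ℕ)).decide.comp this (Primrec.const (some v))).to_comp

/-- complete test -/
def test (c : (ℚ × ℚ) × ℚ) (m : ℕ) : Bool :=
  (outTest c || upTest (1 / 2) c) ||
  ((haltTest 0 m && upTest (1 / 2 + dq m.unpair.1) c) ||
   (haltTest 1 m && dnTest (1 / 2 + dq m.unpair.1) (3 / 4 * dq m.unpair.1) c))

theorem test_comp : Computable₂ test := by
  have hm : Computable fun a : ((ℚ × ℚ) × ℚ) × ℕ => a.2 := Computable.snd
  have hd : Computable fun a : ((ℚ × ℚ) × ℚ) × ℕ => dq a.2.unpair.1 :=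
    computable_dq.comp ((Primrec.fst.comp Primrec.unpair).to_comp.comp hm)
  have hx : Computable fun a : ((ℚ × ℚ) × ℚ) × ℕ => a.1.1.1 :=
    Computable.fst.comp (Computable.fst.comp Computable.fst)
  have hy : Computable fun a : ((ℚ × ℚ) × ℚ) × ℕ => a.1.1.2 :=
    Computable.snd.comp (Computable.fst.comp Computable.fst)
  have hr : Computable fun a : ((ℚ × ℚ) × ℚ) × ℕ => a.1.2 :=
    Computable.snd.comp Computable.fst
  have hz := qadd (Computable.const (α := ((ℚ × ℚ) × ℚ) × ℕ) (1 / 2 : ℚ)) hd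
  have hh := qmul (Computable.const (α := ((ℚ × ℚ) × ℚ) × ℕ) (3 / 4 : ℚ)) hd
  have up : ∀ z : ((ℚ × ℚ) × ℚ) × ℕ → ℚ, Computable z → Computable fun a => upTest (z a) a.1 := by
    intro z hz
    exact cand (qle (qadd (qsub hx hz) hr) (qsub hy hr)) (qle (qadd (qsub hz hx) hr) (qsub hy hr))
  have dn : Computable fun a : ((ℚ × ℚ) × ℚ) × ℕ =>
      dnTest (1 / 2 + dq a.2.unpair.1) (3 / 4 * dq a.2.unpair.1) a.1 :=
    cand (qle (qadd (qsub hx hz) hr) (qsub hh (qadd hy hr)))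
      (qle (qadd (qsub hz hx) hr) (qsub hh (qadd hy hr)))
  have out : Computable fun a : ((ℚ × ℚ) × ℚ) × ℕ => outTest a.1 :=
    cor (qle (qadd hx hr) (Computable.const 0)) (cor (qle (Computable.const 1) (qsub hx hr))
      (qle (qadd hy hr) (Computable.const 0)))
  exact cor (cor out (up _ (Computable.const (1 / 2))))
    (cor (cand ((haltTest_comp 0).comp hm) (up _ hz)) (cand ((haltTest_comp 1).comp hm) dn))

theorem Q_pi01 : IsPi01Closed Q := by
  refine ⟨fun c => ∃ m, test c m = true, re_exists test_comp, ?_⟩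
  ext p
  rw [Set.mem_diff]
  simp only [Set.mem_univ, true_and, Set.mem_iUnion, Set.mem_setOf_eq, not_exists, exists_prop,
    not_and]
  constructor
  · rintro ⟨h1, h2, h3, h4, h5, h6⟩ c ⟨m, hm⟩ hp
    simp only [test, Bool.or_eq_true, Bool.and_eq_true] at hm
    rcases hm with (hm | hm) | ⟨hm', hm⟩ | ⟨hm', hm⟩
    · rcases outTest_sound hm hp with h | h | h <;> linarith
    · have := upTest_sound hm hp
      push_cast at this
      linarith
    · have := upTest_sound hm hp
      have hA : AA m.unpair.1 := (haltTest_iff 0 _).2 ⟨m.unpair.2, by rwa [Nat.pair_unpair]⟩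
      have := h5 _ hA
      unfold d at this
      push_cast at *
      linarith
    · have := dnTest_sound hm hp
      have hB : BB m.unpair.1 := (haltTest_iff 1 _).2 ⟨m.unpair.2, by rwa [Nat.pair_unpair]⟩
      have := h6 _ hB
      unfold d at this
      push_cast at *
      linarith
  · intro h
    have key : ∀ c m, test c m = true → p ∉ ballOfCode c := fun c m hm => h c ⟨m, hm⟩
    have out : ¬ (p.1 < 0 ∨ 1 < p.1 ∨ p.2 < 0) := by
      intro hp
      obtain ⟨c, hc, ht⟩ := outTest_complete hp
      exact key c 0 (by simp [test, ht]) hc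
    simp only [not_or, not_lt] at out
    refine ⟨out.1, out.2.1, out.2.2, ?_, ?_, ?_⟩
    · by_contra hp
      obtain ⟨c, hc, ht⟩ := upTest_complete (z := 1 / 2) (p := p) (by push_cast; linarith)
      exact key c 0 (by simp only [test, ht]; simp) hc
    · intro n hn
      by_contra hp
      obtain ⟨s, hs⟩ := (haltTest_iff 0 n).1 hn
      obtain ⟨c, hc, ht⟩ := upTest_complete (z := 1 / 2 + dq n) (p := p)
        (by unfold d at hp; push_cast; linarith)
      exact key c (Nat.pair n s) (by simp only [test, hs, Nat.unpair_pair, ht]; simp) hc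
    · intro n hn
      by_contra hp
      obtain ⟨s, hs⟩ := (haltTest_iff 1 n).1 hn
      obtain ⟨c, hc, ht⟩ := dnTest_complete (z := 1 / 2 + dq n) (h' := 3 / 4 * dq n) (p := p)
        (by unfold d at hp; push_cast; linarith)
      exact key c (Nat.pair n s) (by simp only [test, hs, Nat.unpair_pair, ht]; simp) hc

/-! ### No computable connected subset close to `Q` -/

theorem zero_mem : ((0:ℝ), (0:ℝ)) ∈ Q := by
  refine ⟨le_rfl, zero_le_one, le_rfl, abs_nonneg _, fun n _ => abs_nonneg _, fun n _ => ?_⟩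
  have := d_pos n
  have := neg_abs_le ((0:ℝ) - (1 / 2 + d n))
  dsimp only
  linarith

theorem one_mem : ((1:ℝ), (0:ℝ)) ∈ Q := by
  refine ⟨zero_le_one, le_rfl, le_rfl, abs_nonneg _, fun n _ => abs_nonneg _, fun n _ => ?_⟩
  have := d_le n
  have := le_abs_self ((1:ℝ) - (1 / 2 + d n))
  dsimp only
  linarith

theorem Q_sub : Q ⊆ Set.Icc (0:ℝ) 1 ×ˢ Set.Icc (0:ℝ) 1 := by
  rintro p ⟨h1, h2, h3, h4, -, -⟩
  refine ⟨⟨h1, h2⟩, h3, h4.trans ?_⟩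
  rw [abs_le]
  constructor <;> linarith

def lowCode (n : ℕ) : (ℚ × ℚ) × ℚ := ((1 / 2 + dq n, 0), 3 / 8 * dq n)
def upCode (n : ℕ) : (ℚ × ℚ) × ℚ := ((1 / 2 + dq n, 7 / 10 * dq n), 7 / 20 * dq n)

theorem lowCode_comp : Computable lowCode :=
  ((qadd (Computable.const _) computable_dq).pair (Computable.const 0)).pair
    (qmul (Computable.const _) computable_dq)
theorem upCode_comp : Computable upCode :=
  ((qadd (Computable.const _) computable_dq).pair (qmul (Computable.const _) computable_dq)).pair
    (qmul (Computable.const _) computable_dq)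

theorem far (B : Set (ℝ × ℝ)) (hBQ : B ⊆ Q) (hB : B.Nonempty) (hconn : IsConnected B)
    (hce : IsCEClosed B) : 1 / 4 ≤ Metric.hausdorffDist B Q := by
  by_contra hlt
  rw [not_le] at hlt
  have hbQ : Bornology.IsBounded Q :=
    ((Metric.isBounded_Icc (0:ℝ) 1).prod (Metric.isBounded_Icc (0:ℝ) 1)).subset Q_sub
  have hfin : Metric.hausdorffEDist B Q ≠ ⊤ :=
    Metric.hausdorffEDist_ne_top_of_nonempty_of_bounded hB ⟨_, zero_mem⟩ (hbQ.subset hBQ) hbQ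
  obtain ⟨a, haB, ha⟩ := Metric.exists_dist_lt_of_hausdorffDist_lt' zero_mem hlt hfin
  obtain ⟨b, hbB, hb⟩ := Metric.exists_dist_lt_of_hausdorffDist_lt' one_mem hlt hfin
  rw [Prod.dist_eq, max_lt_iff, Real.dist_eq, abs_lt] at ha hb
  simp only at ha hb
  have hI := hconn.isPreconnected.intermediate_value haB hbB continuous_fst.continuousOn
  have hpt : ∀ n, ∃ p ∈ B, p.1 = 1 / 2 + d n := by
    intro n
    have h1 := d_pos n
    have h2 := d_le n
    obtain ⟨p, hp, hp'⟩ := hI (show (1 / 2 + d n) ∈ Set.Icc a.1 b.1 from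
      ⟨by linarith [ha.1.1, ha.1.2], by linarith [hb.1.1, hb.1.2]⟩)
    exact ⟨p, hp, hp'⟩
  refine insep (fun n => (B ∩ ballOfCode (lowCode n)).Nonempty)
    (fun n => (B ∩ ballOfCode (upCode n)).Nonempty)
    (Partrec.comp hce lowCode_comp) (Partrec.comp hce upCode_comp) ?_ ?_ ?_
  · intro n
    have hd := d_pos n
    obtain ⟨p, hp, hpx⟩ := hpt n
    obtain ⟨h1, h2, h3, h4, -, -⟩ := hBQ hp
    rw [hpx, add_sub_cancel_left, abs_of_pos hd] at h4
    by_cases h : p.2 < 3 / 8 * d n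
    · left
      refine ⟨p, hp, ?_⟩
      rw [mem_ball_iff]
      unfold lowCode
      unfold d at *
      push_cast
      rw [hpx, sub_self, abs_zero, sub_zero, abs_of_nonneg h3]
      exact ⟨by linarith, h⟩
    · right
      refine ⟨p, hp, ?_⟩
      rw [mem_ball_iff]
      unfold upCode
      unfold d at *
      push_cast
      rw [hpx, sub_self, abs_zero, abs_lt]
      refine ⟨by linarith, ?_, ?_⟩ <;> linarith
  · rintro n hn ⟨p, hp, hpb⟩
    obtain ⟨-, -, -, -, h5, -⟩ := hBQ hp
    have := h5 n hn
    rw [mem_ball_iff, abs_lt (a := p.2 - _)] at hpb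
    unfold upCode at hpb
    unfold d at *
    push_cast at hpb
    linarith [hpb.1, hpb.2.1]
  · rintro n hn ⟨p, hp, hpb⟩
    obtain ⟨-, -, -, -, -, h6⟩ := hBQ hp
    have := h6 n hn
    rw [mem_ball_iff, abs_lt (a := p.2 - _)] at hpb
    unfold lowCode at hpb
    unfold d at *
    push_cast at hpb
    linarith [hpb.1, hpb.2.2]

end MainConstr

theorem exists_contractible_pi01_set_without_connected_computable_subsets :
    ∃ Q : Set (ℝ × ℝ), Q.Nonempty ∧ IsPi01Closed Q ∧
      Q ⊆ Set.Icc (0:ℝ) 1 ×ˢ Set.Icc (0:ℝ) 1 ∧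
      ContractibleSpace ↥Q ∧ LocallyContractibleSpace' ↥Q ∧
      ∃ ε : ℝ, 0 < ε ∧ ∀ B : Set (ℝ × ℝ), B ⊆ Q → B.Nonempty → IsConnected B →
        IsComputableClosed B → ε ≤ Metric.hausdorffDist B Q := by
  exact ⟨MainConstr.Q, ⟨_, MainConstr.zero_mem⟩, MainConstr.Q_pi01, MainConstr.Q_sub,
    RetractTop.contractible_of_retract _ _ MainConstr.ret_cont MainConstr.ret_mem MainConstr.ret_id,
    RetractTop.locallyContractible_of_retract _ _ MainConstr.ret_cont MainConstr.ret_mem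
      MainConstr.ret_id,
    1 / 4, by norm_num, fun B h1 h2 h3 h4 => MainConstr.far B h1 h2 h3 h4.2⟩
end
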